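/- Let P and Q be G-Hilbert modules and suppose there exists a unitary Hilbert C_0(Y)-module isomorphism U : P → Q (not assumed G-equivariant). Then P ⊗_{C_0(Y)} P_G and Q ⊗_{C_0(Y)} P_G are equivalent as G-Hilbert modules, i.e. there is a G-equivariant unitary between them; it is determined on C_c(G,r*E_P) by (Vφ)(g) = g·U_{s(g)}(g^{-1}·φ(g)). -/

import Mathlib

/-!
For `φ ∈ C_c(G, r*E_P)` put `(T φ)(g) = g · U_{s(g)}(g⁻¹ · φ(g))` (`twist`).  The action and the
fiber maps `U_y` are unitary, so `T` preserves continuity, supports and pointwise norms, hence the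
norms in `L²(G^y, λ^y)` for every `y`.

The tensor product `P ⊗ P_G` is a completion of `C_c(G, r*E_P)`: finite sums of elementary sections
have fiber norms equal to the `L²(λ^y)`-norms (`elemPairs_norm`), and approximate every compactly
supported section uniformly with controlled support, by a partition of unity
(`exists_elemPairs_approx`).  Hence each `φ` is represented by an element of `P ⊗ P_G`
(`exists_rep`), and the representing elements are dense.  So `T` extends to a surjective linear
isometry `V : P ⊗ P_G → Q ⊗ P_G` (`exists_extension`) that is isometric on every fiber.
By polarization `V` preserves the `C₀(Y)`-valued inner product (`modIP_of_repSemi`), and a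
surjection preserving inner products is `C₀(Y)`-linear (`msmul_of_modIP`).

`T` is equivariant although `U` is not: since `T` is conjugation of `U` at the source `s(g)`, which
left translation `(k·φ)(g) = k φ(k⁻¹g)` does not change, `T` commutes with left translation
(`isTranslate_twist`).  By left invariance of the Haar system the diagonal action on `P ⊗ P_G` is
left translation of the represented sections (`act_of_isTranslate`), and density gives equivariance
of `V` (`extension_equivariant`).

A technical point underlies the passage between elements and fibers: `I_y P` is an algebraic span,
so that the seminorm `p ↦ ⟨p, p⟩(y)^{1/2}` is a norm on `P / I_y P` only by a factorization
argument (`mem_fiberIdeal_of_repSemi_eq_zero`).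
-/

noncomputable section
open scoped ZeroAtInfty
open Topology Filter ComplexConjugate

namespace Stabilization

/-- The set of continuous sections vanishing at infinity of a family of normed fibers,
relative to a given topology on the total space of the bundle. -/
def C0Sections {Y : Type} [TopologicalSpace Y] (H : Y → Type)
    [∀ y, NormedAddCommGroup (H y)] (tE : TopologicalSpace ((y : Y) × H y)) :
    Set ((y : Y) → H y) :=
  {F | @Continuous Y ((y : Y) × H y) _ tE (fun y => ⟨y, F y⟩) ∧
    Tendsto (fun y => ‖F y‖) (cocompact Y) (nhds 0)}

/-- A Hilbert bundle over `Y` (Definition 2.1 of the paper): a family of Hilbert spaces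
`H y` together with a second countable topology on the total space such that
(i) fiberwise addition and scalar multiplication are continuous, (ii) the norm along any
continuous section vanishing at infinity is continuous, (iii) the continuous sections
vanishing at infinity fill out every fiber, and (iv) the sets `U_{F,ε}` form a base. -/
structure HilbertBundle (Y : Type) [TopologicalSpace Y] where
  H : Y → Type
  [nacg : ∀ y, NormedAddCommGroup (H y)]
  [ips : ∀ y, InnerProductSpace ℂ (H y)]
  [cpl : ∀ y, CompleteSpace (H y)]
  topE : TopologicalSpace ((y : Y) × H y)
  secondCountable : @SecondCountableTopology ((y : Y) × H y) topE
  add_cont : @Continuous {p : ((y : Y) × H y) × ((y : Y) × H y) // p.1.1 = p.2.1}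
      ((y : Y) × H y)
      (@instTopologicalSpaceSubtype _ _ (@instTopologicalSpaceProd _ _ topE topE)) topE
      (fun p => ⟨p.1.1.1, p.1.1.2 + cast (congrArg H p.2).symm p.1.2.2⟩)
  smul_cont : @Continuous (ℂ × (y : Y) × H y) ((y : Y) × H y)
      (@instTopologicalSpaceProd _ _ _ topE) topE
      (fun p => ⟨p.2.1, p.1 • p.2.2⟩)
  norm_cont : ∀ F ∈ C0Sections H topE, Continuous fun y => ‖F y‖
  fiber_full : ∀ (y : Y) (v : H y), ∃ F ∈ C0Sections H topE, F y = v
  isBasis : @TopologicalSpace.IsTopologicalBasis ((y : Y) × H y) topE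
      {S | ∃ (U : Set Y) (F : (y : Y) → H y) (ε : ℝ), IsOpen U ∧ F ∈ C0Sections H topE ∧
        0 < ε ∧ S = {e | e.1 ∈ U ∧ ‖e.2 - F e.1‖ < ε}}

attribute [instance] HilbertBundle.nacg HilbertBundle.ips HilbertBundle.cpl

/-- A Hilbert `C₀(Y)`-module structure on `P`: a right `C₀(Y)`-module action and a
`C₀(Y)`-valued inner product, complete for the norm `‖p‖ = ‖⟨p,p⟩‖^{1/2}` (completeness
being recorded by a `CompleteSpace` instance on `P` at use sites). -/
class HilbertCzeroModule (Y : Type) [TopologicalSpace Y] (P : Type)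
    [NormedAddCommGroup P] [NormedSpace ℂ P] where
  msmul : P → C₀(Y, ℂ) → P
  minner : P → P → C₀(Y, ℂ)
  msmul_add_left : ∀ (p q : P) (f : C₀(Y, ℂ)), msmul (p + q) f = msmul p f + msmul q f
  msmul_add_right : ∀ (p : P) (f g : C₀(Y, ℂ)), msmul p (f + g) = msmul p f + msmul p g
  msmul_mul : ∀ (p : P) (f g : C₀(Y, ℂ)), msmul (msmul p f) g = msmul p (f * g)
  msmul_csmul_left : ∀ (c : ℂ) (p : P) (f : C₀(Y, ℂ)), msmul (c • p) f = c • msmul p f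
  msmul_csmul_right : ∀ (c : ℂ) (p : P) (f : C₀(Y, ℂ)), msmul p (c • f) = c • msmul p f
  minner_add_right : ∀ p q r : P, minner p (q + r) = minner p q + minner p r
  minner_conj : ∀ p q : P, minner p q = star (minner q p)
  minner_csmul_right : ∀ (c : ℂ) (p q : P), minner p (c • q) = c • minner p q
  minner_msmul_right : ∀ (p q : P) (f : C₀(Y, ℂ)), minner p (msmul q f) = minner p q * f
  minner_self_re_nonneg : ∀ (p : P) (y : Y), 0 ≤ (minner p p y).re
  minner_self_im : ∀ (p : P) (y : Y), (minner p p y).im = 0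
  norm_eq : ∀ p : P, ‖p‖ = Real.sqrt ‖minner p p‖

/-- The module action, with the base space explicit. -/
def modSMul (Y : Type) [TopologicalSpace Y] {P : Type} [NormedAddCommGroup P]
    [NormedSpace ℂ P] [HilbertCzeroModule Y P] (p : P) (f : C₀(Y, ℂ)) : P :=
  HilbertCzeroModule.msmul p f

/-- The `C₀(Y)`-valued inner product, with the base space explicit. -/
def modIP (Y : Type) [TopologicalSpace Y] {P : Type} [NormedAddCommGroup P]
    [NormedSpace ℂ P] [HilbertCzeroModule Y P] (p q : P) : C₀(Y, ℂ) :=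
  HilbertCzeroModule.minner p q

variable (Y : Type) [TopologicalSpace Y]
variable (P : Type) [NormedAddCommGroup P] [NormedSpace ℂ P] [HilbertCzeroModule Y P]

/-- `I_y P`: the closed submodule generated by products `p·f` with `f(y) = 0`. -/
def fiberIdeal (y : Y) : Submodule ℂ P :=
  Submodule.span ℂ {x | ∃ (f : C₀(Y, ℂ)) (p : P), f y = 0 ∧ x = modSMul Y p f}

/-- The fiber `P_y = P / I_y P` of the Hilbert bundle associated to `P`. -/
abbrev Fib (y : Y) : Type := P ⧸ fiberIdeal Y P y

/-- `p ↦ p̂(y)`, the image of `p` in the fiber `P_y`. -/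
def fibMk (y : Y) : P → Fib Y P y := Submodule.Quotient.mk

/-- The fiber norm of `p̂(y)`, computed from a representative. -/
def fibNormRep (y : Y) (p : P) : ℝ := Real.sqrt ((modIP Y p p) y).re

/-- The norm on the fiber `P_y` (the common value of `fibNormRep` over representatives). -/
def fibNormQ (y : Y) (h : Fib Y P y) : ℝ :=
  sInf {r | ∃ p : P, h = fibMk Y P y p ∧ r = fibNormRep Y P y p}

/-- The total space `E_P = ⊔_y P_y` of the bundle associated to `P`. -/
abbrev TotalP : Type := (y : Y) × Fib Y P y

/-- The basic sets `U_{p,ε}` of the bundle `E_P`. -/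
def basisP : Set (Set (TotalP Y P)) :=
  {S | ∃ (U : Set Y) (p : P) (ε : ℝ), IsOpen U ∧ 0 < ε ∧
    S = {e : TotalP Y P | e.1 ∈ U ∧ fibNormQ Y P e.1 (e.2 - fibMk Y P e.1 p) < ε}}

/-- The topology on `E_P` generated by the sets `U_{p,ε}`. -/
def topEP : TopologicalSpace (TotalP Y P) := TopologicalSpace.generateFrom (basisP Y P)

/-- The continuous sections of `E_P` vanishing at infinity. -/
def C0SectionsP : Set ((y : Y) → Fib Y P y) :=
  {F | @Continuous Y (TotalP Y P) _ (topEP Y P) (fun y => ⟨y, F y⟩) ∧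
    Tendsto (fun y => fibNormQ Y P y (F y)) (cocompact Y) (nhds 0)}

/-- The section `p̂` associated to `p ∈ P`. -/
def hatSec (p : P) : (y : Y) → Fib Y P y := fun y => fibMk Y P y p

/-- Transport between fibers of `E_P` over equal base points. -/
def fcast {y z : Y} (h : y = z) : Fib Y P y → Fib Y P z := fun v => h ▸ v


variable (Y : Type) [TopologicalSpace Y]

/-- A second countable locally compact Hausdorff proper topological groupoid with unit
space `Y`.  Multiplication is recorded as a total map which is only constrained on
composable pairs. -/
structure LCGroupoid where
  G : Type
  [topG : TopologicalSpace G]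
  [t2G : T2Space G]
  [lcG : LocallyCompactSpace G]
  [scG : SecondCountableTopology G]
  [mG : MeasurableSpace G]
  [bG : BorelSpace G]
  r : G → Y
  s : G → Y
  unit : Y → G
  mul : G → G → G
  inv : G → G
  unit_embedding : Topology.IsEmbedding unit
  r_unit : ∀ y, r (unit y) = y
  s_unit : ∀ y, s (unit y) = y
  r_cont : Continuous r
  s_cont : Continuous s
  inv_cont : Continuous inv
  mul_cont : Continuous fun p : {p : G × G // s p.1 = r p.2} => mul p.1.1 p.1.2
  r_mul : ∀ g h, s g = r h → r (mul g h) = r g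
  s_mul : ∀ g h, s g = r h → s (mul g h) = s h
  mul_assoc : ∀ g h k, s g = r h → s h = r k → mul (mul g h) k = mul g (mul h k)
  mul_unit : ∀ g, mul g (unit (s g)) = g
  unit_mul : ∀ g, mul (unit (r g)) g = g
  r_inv : ∀ g, r (inv g) = s g
  s_inv : ∀ g, s (inv g) = r g
  mul_inv : ∀ g, mul g (inv g) = unit (r g)
  inv_mul : ∀ g, mul (inv g) g = unit (s g)
  proper : IsProperMap fun g => (r g, s g)

attribute [instance] LCGroupoid.topG LCGroupoid.t2G LCGroupoid.lcG LCGroupoid.scG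
  LCGroupoid.mG LCGroupoid.bG

variable (Gp : LCGroupoid Y)

/-- A left Haar system `{λ^y}` for the groupoid `Gp`:  `λ^y` is a Radon-type measure
concentrated on `G^y = r⁻¹(y)` with support `G^y`, varying continuously, and
left invariant. -/
structure HaarSystem where
  lam : Y → MeasureTheory.Measure Gp.G
  concentrated : ∀ y, lam y ((Gp.r ⁻¹' {y})ᶜ) = 0
  full : ∀ (y : Y) (U : Set Gp.G), IsOpen U → (U ∩ Gp.r ⁻¹' {y}).Nonempty → lam y U ≠ 0
  finiteOnCompacts : ∀ (y : Y) (K : Set Gp.G), IsCompact K → lam y K ≠ ⊤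
  integral_continuous : ∀ F : Gp.G → ℂ, Continuous F → HasCompactSupport F →
    Continuous fun y => ∫ g, F g ∂(lam y)
  left_invariant : ∀ (g₀ : Gp.G) (F : Gp.G → ℂ), Continuous F → HasCompactSupport F →
    ∫ g, F (Gp.mul g₀ g) ∂(lam (Gp.s g₀)) = ∫ g, F g ∂(lam (Gp.r g₀))

/-- Continuous compactly supported functions on the groupoid `Gp`. -/
def CcFun : Type := {F : Gp.G → ℂ // Continuous F ∧ HasCompactSupport F}


section GroupoidActions

variable {Y : Type} [TopologicalSpace Y] (Gp : LCGroupoid Y)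
variable (P : Type) [NormedAddCommGroup P] [NormedSpace ℂ P] [HilbertCzeroModule Y P]

/-- A continuous, unitary left action of the groupoid `Gp` on the Hilbert bundle `E_P`
associated to the Hilbert `C₀(Y)`-module `P`: this is the datum making `P` a
`G`-Hilbert module. -/
structure GAction where
  act : (g : Gp.G) → Fib Y P (Gp.s g) → Fib Y P (Gp.r g)
  act_add : ∀ (g : Gp.G) (v w : Fib Y P (Gp.s g)), act g (v + w) = act g v + act g w
  act_csmul : ∀ (g : Gp.G) (c : ℂ) (v : Fib Y P (Gp.s g)), act g (c • v) = c • act g v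
  act_norm : ∀ (g : Gp.G) (v : Fib Y P (Gp.s g)),
    fibNormQ Y P (Gp.r g) (act g v) = fibNormQ Y P (Gp.s g) v
  act_surjective : ∀ g : Gp.G, Function.Surjective (act g)
  act_unit : ∀ (y : Y) (v : Fib Y P y),
    act (Gp.unit y) (fcast Y P (Gp.s_unit y).symm v) = fcast Y P (Gp.r_unit y).symm v
  act_mul : ∀ (g h : Gp.G) (hc : Gp.s g = Gp.r h) (v : Fib Y P (Gp.s h)),
    act (Gp.mul g h) (fcast Y P (Gp.s_mul g h hc).symm v) =
      fcast Y P (Gp.r_mul g h hc).symm (act g (fcast Y P hc.symm (act h v)))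
  act_cont : @Continuous {q : Gp.G × TotalP Y P // Gp.s q.1 = q.2.1} (TotalP Y P)
    (@instTopologicalSpaceSubtype _ _ (@instTopologicalSpaceProd _ _ _ (topEP Y P)))
    (topEP Y P)
    (fun q => ⟨Gp.r q.1.1, act q.1.1 (fcast Y P q.2.symm q.1.2.2)⟩)

variable {Gp P}
variable {Q : Type} [NormedAddCommGroup Q] [NormedSpace ℂ Q] [HilbertCzeroModule Y Q]

/-- A `G`-equivariant unitary isomorphism of `G`-Hilbert modules:  a bijective,
`ℂ`-linear, `C₀(Y)`-linear, inner-product preserving map intertwining the `G`-actions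
on the associated Hilbert bundles. -/
def IsGEquivariantUnitary (T : P → Q) (AP : GAction Gp P) (AQ : GAction Gp Q) : Prop :=
  Function.Bijective T ∧
  (∀ p p' : P, T (p + p') = T p + T p') ∧
  (∀ (c : ℂ) (p : P), T (c • p) = c • T p) ∧
  (∀ (p : P) (f : C₀(Y, ℂ)), T (modSMul Y p f) = modSMul Y (T p) f) ∧
  (∀ p p' : P, modIP Y (T p) (T p') = modIP Y p p') ∧
  (∀ (g : Gp.G) (p p' : P),
      AP.act g (fibMk Y P (Gp.s g) p) = fibMk Y P (Gp.r g) p' →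
      AQ.act g (fibMk Y Q (Gp.s g) (T p)) = fibMk Y Q (Gp.r g) (T p'))

/-- Equivalence of `G`-Hilbert modules: existence of a `G`-equivariant unitary. -/
def GEquiv (AP : GAction Gp P) (AQ : GAction Gp Q) : Prop :=
  ∃ T : P → Q, IsGEquivariantUnitary T AP AQ

end GroupoidActions

section ModuleConstructions

variable {Y : Type} [TopologicalSpace Y] (Gp : LCGroupoid Y)

/-- Data exhibiting a Hilbert `C₀(Y)`-module `PG` as the completion `P_G` of the
pre-Hilbert `C₀(Y)`-module `C_c(G)`, with module action `F·f = F·(f∘r)` and inner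
product `⟨F₁,F₂⟩(y) = ∫_{G^y} conj F₁ · F₂ dλ^y`. -/
structure PGData (hs : HaarSystem Y Gp) (PG : Type) [NormedAddCommGroup PG]
    [NormedSpace ℂ PG] [HilbertCzeroModule Y PG] where
  emb : CcFun Y Gp → PG
  emb_add : ∀ F₁ F₂ F₃ : CcFun Y Gp, F₃.1 = F₁.1 + F₂.1 → emb F₃ = emb F₁ + emb F₂
  emb_csmul : ∀ (c : ℂ) (F₁ F₃ : CcFun Y Gp), F₃.1 = c • F₁.1 → emb F₃ = c • emb F₁
  emb_msmul : ∀ (F₁ F₃ : CcFun Y Gp) (f : C₀(Y, ℂ)),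
    F₃.1 = (fun g => F₁.1 g * f (Gp.r g)) → emb F₃ = modSMul Y (emb F₁) f
  emb_inner : ∀ (F₁ F₂ : CcFun Y Gp) (y : Y),
    modIP Y (emb F₁) (emb F₂) y = ∫ g, conj (F₁.1 g) * F₂.1 g ∂(hs.lam y)
  emb_dense : ∀ (p : PG) (ε : ℝ), 0 < ε → ∃ F : CcFun Y Gp, ‖p - emb F‖ < ε

variable {Gp}

/-- The natural left translation action of `G` on `L²(G) = E_{P_G}`, characterized on
the dense image of `C_c(G)` by `(g·ξ)(h) = ξ(g⁻¹h)` for `h ∈ G^{r(g)}`. -/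
def IsNaturalPGAction {hs : HaarSystem Y Gp} {PG : Type} [NormedAddCommGroup PG]
    [NormedSpace ℂ PG] [HilbertCzeroModule Y PG] (d : PGData Gp hs PG)
    (A : GAction Gp PG) : Prop :=
  ∀ (g : Gp.G) (F F' : CcFun Y Gp),
    (∀ h : Gp.G, Gp.r h = Gp.r g → F'.1 h = F.1 (Gp.mul (Gp.inv g) h)) →
    A.act g (fibMk Y PG (Gp.s g) (d.emb F)) = fibMk Y PG (Gp.r g) (d.emb F')

end ModuleConstructions

section TensorSum

/-- Data exhibiting `R` as the interior tensor product `P ⊗_{C₀(Y)} Q` of two Hilbert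
`C₀(Y)`-modules: a balanced bilinear map with dense span satisfying
`⟨p₁⊗q₁, p₂⊗q₂⟩ = ⟨p₁,p₂⟩⟨q₁,q₂⟩`. -/
structure TensorData (Y : Type) [TopologicalSpace Y] (P Q R : Type)
    [NormedAddCommGroup P] [NormedSpace ℂ P] [HilbertCzeroModule Y P]
    [NormedAddCommGroup Q] [NormedSpace ℂ Q] [HilbertCzeroModule Y Q]
    [NormedAddCommGroup R] [NormedSpace ℂ R] [HilbertCzeroModule Y R] where
  t : P → Q → R
  t_add_left : ∀ (p p' : P) (q : Q), t (p + p') q = t p q + t p' q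
  t_add_right : ∀ (p : P) (q q' : Q), t p (q + q') = t p q + t p q'
  t_csmul_left : ∀ (c : ℂ) (p : P) (q : Q), t (c • p) q = c • t p q
  t_csmul_right : ∀ (c : ℂ) (p : P) (q : Q), t p (c • q) = c • t p q
  t_msmul_left : ∀ (p : P) (q : Q) (f : C₀(Y, ℂ)), t (modSMul Y p f) q = modSMul Y (t p q) f
  t_msmul_right : ∀ (p : P) (q : Q) (f : C₀(Y, ℂ)), t p (modSMul Y q f) = modSMul Y (t p q) f
  t_inner : ∀ (p p' : P) (q q' : Q),
    modIP Y (t p q) (t p' q') = modIP Y p p' * modIP Y q q'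
  t_dense : ∀ (x : R) (ε : ℝ), 0 < ε →
    ∃ (n : ℕ) (ps : Fin n → P) (qs : Fin n → Q), ‖x - ∑ i, t (ps i) (qs i)‖ < ε

/-- Data exhibiting `S` as the Hilbert `C₀(Y)`-module direct sum `P ⊕ Q`. -/
structure SumData (Y : Type) [TopologicalSpace Y] (P Q S : Type)
    [NormedAddCommGroup P] [NormedSpace ℂ P] [HilbertCzeroModule Y P]
    [NormedAddCommGroup Q] [NormedSpace ℂ Q] [HilbertCzeroModule Y Q]
    [NormedAddCommGroup S] [NormedSpace ℂ S] [HilbertCzeroModule Y S] where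
  inl : P → S
  inr : Q → S
  inl_add : ∀ p p' : P, inl (p + p') = inl p + inl p'
  inr_add : ∀ q q' : Q, inr (q + q') = inr q + inr q'
  inl_csmul : ∀ (c : ℂ) (p : P), inl (c • p) = c • inl p
  inr_csmul : ∀ (c : ℂ) (q : Q), inr (c • q) = c • inr q
  inl_msmul : ∀ (p : P) (f : C₀(Y, ℂ)), inl (modSMul Y p f) = modSMul Y (inl p) f
  inr_msmul : ∀ (q : Q) (f : C₀(Y, ℂ)), inr (modSMul Y q f) = modSMul Y (inr q) f
  inner_ll : ∀ p p' : P, modIP Y (inl p) (inl p') = modIP Y p p'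
  inner_rr : ∀ q q' : Q, modIP Y (inr q) (inr q') = modIP Y q q'
  inner_lr : ∀ (p : P) (q : Q), modIP Y (inl p) (inr q) = 0
  total : ∀ x : S, ∃ (p : P) (q : Q), x = inl p + inr q

/-- Data exhibiting `S` as the Hilbert `C₀(Y)`-module direct sum `⊕_{i=1}^∞ P i` of a
sequence of Hilbert `C₀(Y)`-modules: the module of sequences `{p_i}`, `p_i ∈ P i`, with
`Σ_i ⟨p_i,p_i⟩` convergent in `C₀(Y)`. -/
structure InftySumData (Y : Type) [TopologicalSpace Y] (Pf : ℕ → Type) (S : Type)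
    [∀ i, NormedAddCommGroup (Pf i)] [∀ i, NormedSpace ℂ (Pf i)]
    [∀ i, HilbertCzeroModule Y (Pf i)]
    [NormedAddCommGroup S] [NormedSpace ℂ S] [HilbertCzeroModule Y S] where
  proj : (i : ℕ) → S → Pf i
  proj_add : ∀ (i : ℕ) (x x' : S), proj i (x + x') = proj i x + proj i x'
  proj_csmul : ∀ (i : ℕ) (c : ℂ) (x : S), proj i (c • x) = c • proj i x
  proj_msmul : ∀ (i : ℕ) (x : S) (f : C₀(Y, ℂ)),
    proj i (modSMul Y x f) = modSMul Y (proj i x) f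
  proj_inner : ∀ x x' : S, HasSum (fun i => modIP Y (proj i x) (proj i x')) (modIP Y x x')
  proj_injective : ∀ x x' : S, (∀ i, proj i x = proj i x') → x = x'
  proj_surjective : ∀ u : (i : ℕ) → Pf i, Summable (fun i => modIP Y (u i) (u i)) →
    ∃ x : S, ∀ i, proj i x = u i

variable {Y : Type} [TopologicalSpace Y] {Gp : LCGroupoid Y}
variable {P Q R S : Type}
  [NormedAddCommGroup P] [NormedSpace ℂ P] [HilbertCzeroModule Y P]
  [NormedAddCommGroup Q] [NormedSpace ℂ Q] [HilbertCzeroModule Y Q]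
  [NormedAddCommGroup R] [NormedSpace ℂ R] [HilbertCzeroModule Y R]
  [NormedAddCommGroup S] [NormedSpace ℂ S] [HilbertCzeroModule Y S]

/-- The diagonal `G`-action on a tensor product `P ⊗_{C₀(Y)} Q`. -/
def IsDiagonalAction (td : TensorData Y P Q R) (AP : GAction Gp P) (AQ : GAction Gp Q)
    (AR : GAction Gp R) : Prop :=
  ∀ (g : Gp.G) (p p' : P) (q q' : Q),
    AP.act g (fibMk Y P (Gp.s g) p) = fibMk Y P (Gp.r g) p' →
    AQ.act g (fibMk Y Q (Gp.s g) q) = fibMk Y Q (Gp.r g) q' →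
    AR.act g (fibMk Y R (Gp.s g) (td.t p q)) = fibMk Y R (Gp.r g) (td.t p' q')

/-- The coordinatewise `G`-action on a direct sum `P ⊕ Q`. -/
def IsCoordinateSumAction (sd : SumData Y P Q S) (AP : GAction Gp P) (AQ : GAction Gp Q)
    (AS : GAction Gp S) : Prop :=
  (∀ (g : Gp.G) (p p' : P),
    AP.act g (fibMk Y P (Gp.s g) p) = fibMk Y P (Gp.r g) p' →
    AS.act g (fibMk Y S (Gp.s g) (sd.inl p)) = fibMk Y S (Gp.r g) (sd.inl p')) ∧
  (∀ (g : Gp.G) (q q' : Q),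
    AQ.act g (fibMk Y Q (Gp.s g) q) = fibMk Y Q (Gp.r g) q' →
    AS.act g (fibMk Y S (Gp.s g) (sd.inr q)) = fibMk Y S (Gp.r g) (sd.inr q'))

/-- The coordinatewise `G`-action on an infinite direct sum `⊕_{i=1}^∞ P i`. -/
def IsCoordinateInftyAction {Pf : ℕ → Type} [∀ i, NormedAddCommGroup (Pf i)]
    [∀ i, NormedSpace ℂ (Pf i)] [∀ i, HilbertCzeroModule Y (Pf i)]
    (d : InftySumData Y Pf S) (Af : (i : ℕ) → GAction Gp (Pf i))
    (AS : GAction Gp S) : Prop :=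
  ∀ (g : Gp.G) (x x' : S),
    AS.act g (fibMk Y S (Gp.s g) x) = fibMk Y S (Gp.r g) x' →
    ∀ i, (Af i).act g (fibMk Y (Pf i) (Gp.s g) (d.proj i x)) =
      fibMk Y (Pf i) (Gp.r g) (d.proj i x')

end TensorSum


section PullbackSections

variable {Y : Type} [TopologicalSpace Y] {Gp : LCGroupoid Y}

/-- A continuous compactly supported section of the pull-back bundle `r*E_P`. -/
def CcPullbackSection (P : Type) [NormedAddCommGroup P] [NormedSpace ℂ P]
    [HilbertCzeroModule Y P] (φ : (g : Gp.G) → Fib Y P (Gp.r g)) : Prop :=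
  (@Continuous Gp.G (TotalP Y P) _ (topEP Y P) fun g => ⟨Gp.r g, φ g⟩) ∧
  ∃ K : Set Gp.G, IsCompact K ∧ ∀ g ∉ K, φ g = 0

/-- `φ̂ = Fs`: the section `Fs` of `E_{P ⊗ P_G}` is the image `φ̂(y) = φ|_{G^y}` of
`φ ∈ C_c(G, r*E_P)`, in the sense that `φ` and `Fs` admit the same approximations by
finite sums `Σᵢ ĥᵢ ⊗ p̂ᵢ`, uniformly in `y`. -/
def RepresentsHat (hs : HaarSystem Y Gp)
    (P : Type) [NormedAddCommGroup P] [NormedSpace ℂ P] [HilbertCzeroModule Y P]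
    (PG : Type) [NormedAddCommGroup PG] [NormedSpace ℂ PG] [HilbertCzeroModule Y PG]
    (R : Type) [NormedAddCommGroup R] [NormedSpace ℂ R] [HilbertCzeroModule Y R]
    (td : TensorData Y P PG R) (d : PGData Gp hs PG)
    (φ : (g : Gp.G) → Fib Y P (Gp.r g)) (Fs : (y : Y) → Fib Y R y) : Prop :=
  Fs ∈ C0SectionsP Y R ∧
  ∀ ε : ℝ, 0 < ε → ∃ (n : ℕ) (h : Fin n → CcFun Y Gp) (p : Fin n → P),
    (∀ y : Y,
      (∫ g, (fibNormQ Y P (Gp.r g)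
        (φ g - ∑ i, (h i).1 g • fibMk Y P (Gp.r g) (p i))) ^ 2 ∂(hs.lam y)) ≤ ε ^ 2) ∧
    (∀ y : Y,
      fibNormQ Y R y (Fs y - fibMk Y R y (∑ i, td.t (p i) (d.emb (h i)))) ≤ ε)

end PullbackSections

/-! ### Hilbert `C₀(Y)`-modules and their fibers -/

section HilbertModuleBasics

variable {Y : Type} [TopologicalSpace Y]
variable {P : Type} [NormedAddCommGroup P] [NormedSpace ℂ P] [HilbertCzeroModule Y P]

theorem ip_add_right (p q r : P) (y : Y) :
    modIP Y p (q + r) y = modIP Y p q y + modIP Y p r y := by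
  simp [modIP, HilbertCzeroModule.minner_add_right]

theorem ip_conj (p q : P) (y : Y) : modIP Y p q y = conj (modIP Y q p y) := by
  have h := HilbertCzeroModule.minner_conj (Y := Y) p q
  have h2 := DFunLike.congr_fun h y
  simpa [modIP] using h2

theorem ip_smul_right (c : ℂ) (p q : P) (y : Y) :
    modIP Y p (c • q) y = c * modIP Y p q y := by
  simp [modIP, HilbertCzeroModule.minner_csmul_right]

theorem ip_msmul_right (p q : P) (f : C₀(Y, ℂ)) (y : Y) :
    modIP Y p (modSMul Y q f) y = modIP Y p q y * f y := by
  simp [modIP, modSMul, HilbertCzeroModule.minner_msmul_right]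

theorem ip_msmul_left (p q : P) (f : C₀(Y, ℂ)) (y : Y) :
    modIP Y (modSMul Y p f) q y = conj (f y) * modIP Y p q y := by
  rw [ip_conj, ip_msmul_right, map_mul, ← ip_conj, mul_comm]

variable (P) in
/-- The positive semidefinite sesquilinear form `⟨·,·⟩(y)` on `P`. -/
@[reducible] def ipCore (y : Y) : PreInnerProductSpace.Core ℂ P where
  inner p q := modIP Y p q y
  conj_inner_symm p q := (ip_conj p q y).symm
  re_inner_nonneg p := HilbertCzeroModule.minner_self_re_nonneg p y
  add_left p q r := by
    change modIP Y (p + q) r y = modIP Y p r y + modIP Y q r y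
    rw [ip_conj, ip_add_right, map_add, ← ip_conj, ← ip_conj]
  smul_left p q c := by
    change modIP Y (c • p) q y = conj c * modIP Y p q y
    rw [ip_conj, ip_smul_right, map_mul, ← ip_conj]

variable (P) in
/-- The seminorm `p ↦ ⟨p,p⟩(y)^{1/2}` on `P`. -/
def repSemi (y : Y) : Seminorm ℂ P :=
  @normSeminorm ℂ P _ (@InnerProductSpace.Core.toSeminormedAddCommGroup ℂ P _ _ _ (ipCore P y))
    (@InnerProductSpace.Core.toNormedSpace ℂ P _ _ _ (ipCore P y))

theorem repSemi_apply (y : Y) (p : P) : repSemi P y p = fibNormRep Y P y p := rfl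

theorem repSemi_def (y : Y) (p : P) : repSemi P y p = √(modIP Y p p y).re := rfl

theorem ip_self_re_nonneg (p : P) (y : Y) : 0 ≤ (modIP Y p p y).re :=
  HilbertCzeroModule.minner_self_re_nonneg p y

theorem repSemi_sq (y : Y) (p : P) : repSemi P y p ^ 2 = (modIP Y p p y).re := by
  rw [repSemi_def, Real.sq_sqrt (ip_self_re_nonneg p y)]

theorem ip_self_eq (y : Y) (p : P) : modIP Y p p y = ((repSemi P y p ^ 2 : ℝ) : ℂ) := by
  rw [repSemi_sq]
  apply Complex.ext
  · simp
  · exact (HilbertCzeroModule.minner_self_im p y).trans (Complex.ofReal_im _).symm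

theorem repSemi_le_norm (y : Y) (p : P) : repSemi P y p ≤ ‖p‖ := by
  rw [repSemi_def, HilbertCzeroModule.norm_eq (Y := Y) p]
  refine Real.sqrt_le_sqrt ((Complex.re_le_norm _).trans ?_)
  rw [← ZeroAtInftyContinuousMap.norm_toBCF_eq_norm]
  exact (HilbertCzeroModule.minner p p : C₀(Y, ℂ)).toBCF.norm_coe_le_norm y

theorem norm_le_of_repSemi_le {p : P} {C : ℝ} (hC : 0 ≤ C)
    (h : ∀ y : Y, repSemi P y p ≤ C) : ‖p‖ ≤ C := by
  rw [HilbertCzeroModule.norm_eq (Y := Y) p, Real.sqrt_le_left hC,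
    ← ZeroAtInftyContinuousMap.norm_toBCF_eq_norm, BoundedContinuousFunction.norm_le (by positivity)]
  intro y
  change ‖modIP Y p p y‖ ≤ _
  rw [ip_self_eq, Complex.norm_real, Real.norm_of_nonneg (by positivity)]
  have := h y
  gcongr

theorem repSemi_msmul (y : Y) (p : P) (f : C₀(Y, ℂ)) :
    repSemi P y (modSMul Y p f) = ‖f y‖ * repSemi P y p := by
  have h : repSemi P y (modSMul Y p f) ^ 2 = (‖f y‖ * repSemi P y p) ^ 2 := by
    have := ip_self_eq y (modSMul Y p f)
    rw [ip_msmul_left, ip_msmul_right, ip_self_eq, mul_comm, mul_assoc, Complex.mul_conj'] at this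
    have h2 : ((repSemi P y p ^ 2 * ‖f y‖ ^ 2 : ℝ) : ℂ) =
      ((repSemi P y (modSMul Y p f) ^ 2 : ℝ) : ℂ) := by rw [← this]; push_cast; ring
    have h3 := Complex.ofReal_injective h2
    rw [← h3]; ring
  exact (pow_left_inj₀ (apply_nonneg _ _) (mul_nonneg (norm_nonneg _) (apply_nonneg _ _))
    two_ne_zero).1 h

theorem repSemi_eq_zero_of_mem {y : Y} {p : P} (h : p ∈ fiberIdeal Y P y) :
    repSemi P y p = 0 := by
  induction h using Submodule.span_induction with
  | mem x hx =>
    obtain ⟨f, q, hf, rfl⟩ := hx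
    rw [repSemi_msmul, hf]; simp
  | zero => exact map_zero _
  | add x z _ _ hx hz =>
    exact le_antisymm ((map_add_le_add _ x z).trans (by rw [hx, hz]; simp)) (apply_nonneg _ _)
  | smul c x _ hx => rw [map_smul_eq_mul, hx, mul_zero]

/-- The norm on `P / I_y P` does not depend on the representative, so the infimum defining it is
that of a single value. -/
theorem fibNormQ_mk (y : Y) (p : P) : fibNormQ Y P y (fibMk Y P y p) = repSemi P y p := by
  have : {r | ∃ p' : P, fibMk Y P y p = fibMk Y P y p' ∧ r = fibNormRep Y P y p'} =
      {repSemi P y p} := by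
    ext r
    simp only [Set.mem_ofPred_eq, Set.mem_singleton_iff]
    constructor
    · rintro ⟨p', hp, rfl⟩
      have h0 := repSemi_eq_zero_of_mem ((Submodule.Quotient.eq _).1 hp)
      have := abs_sub_map_le_sub (repSemi P y) p p'
      rw [h0] at this
      rw [← repSemi_apply]
      linarith [abs_nonpos_iff.1 this]
    · rintro rfl
      exact ⟨p, rfl, rfl⟩
  rw [fibNormQ, this, csInf_singleton]

theorem fibMk_surj (y : Y) (v : Fib Y P y) : ∃ p, fibMk Y P y p = v :=
  Submodule.Quotient.mk_surjective _ v

@[simp] theorem fibMk_add (y : Y) (p q : P) :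
    fibMk Y P y (p + q) = fibMk Y P y p + fibMk Y P y q := rfl
@[simp] theorem fibMk_sub (y : Y) (p q : P) :
    fibMk Y P y (p - q) = fibMk Y P y p - fibMk Y P y q := rfl
@[simp] theorem fibMk_smul (y : Y) (c : ℂ) (p : P) :
    fibMk Y P y (c • p) = c • fibMk Y P y p := rfl
@[simp] theorem fibMk_zero (y : Y) : fibMk Y P y (0 : P) = 0 := rfl
theorem fibMk_sum (y : Y) {ι : Type*} (s : Finset ι) (p : ι → P) :
    fibMk Y P y (∑ i ∈ s, p i) = ∑ i ∈ s, fibMk Y P y (p i) :=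
  map_sum (fiberIdeal Y P y).mkQ p s

variable (P) in
/-- `fibNormQ`, bundled as a seminorm on the fiber. -/
def fibSemi (y : Y) : Seminorm ℂ (Fib Y P y) :=
  Seminorm.of (fibNormQ Y P y)
    (by
      intro v w
      obtain ⟨p, rfl⟩ := fibMk_surj y v
      obtain ⟨q, rfl⟩ := fibMk_surj y w
      rw [← fibMk_add, fibNormQ_mk, fibNormQ_mk, fibNormQ_mk]
      exact map_add_le_add _ _ _)
    (by
      intro c v
      obtain ⟨p, rfl⟩ := fibMk_surj y v
      rw [← fibMk_smul, fibNormQ_mk, fibNormQ_mk, map_smul_eq_mul])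

theorem fibSemi_apply (y : Y) (v : Fib Y P y) : fibSemi P y v = fibNormQ Y P y v := rfl

@[simp] theorem fibSemi_mk (y : Y) (p : P) : fibSemi P y (fibMk Y P y p) = repSemi P y p :=
  fibNormQ_mk y p

theorem norm_msmul_le {p : P} {f : C₀(Y, ℂ)} {C : ℝ} (hC : 0 ≤ C)
    (h : ∀ y : Y, ‖f y‖ * repSemi P y p ≤ C) : ‖modSMul Y p f‖ ≤ C :=
  norm_le_of_repSemi_le hC fun y => by rw [repSemi_msmul]; exact h y

theorem msmul_sub_left (p q : P) (f : C₀(Y, ℂ)) :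
    modSMul Y (p - q) f = modSMul Y p f - modSMul Y q f := by
  have h := HilbertCzeroModule.msmul_add_left (Y := Y) (p - q) q f
  rw [sub_add_cancel] at h
  exact eq_sub_of_add_eq h.symm

theorem msmul_sub_right (p : P) (f g : C₀(Y, ℂ)) :
    modSMul Y p (f - g) = modSMul Y p f - modSMul Y p g := by
  have h := HilbertCzeroModule.msmul_add_right (Y := Y) p (f - g) g
  rw [sub_add_cancel] at h
  exact eq_sub_of_add_eq h.symm

theorem norm_msmul_le_mul (p : P) (f : C₀(Y, ℂ)) : ‖modSMul Y p f‖ ≤ ‖f‖ * ‖p‖ := by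
  refine norm_msmul_le (by positivity) fun y => ?_
  gcongr
  · rw [← ZeroAtInftyContinuousMap.norm_toBCF_eq_norm]
    exact f.toBCF.norm_coe_le_norm y
  · exact repSemi_le_norm y p

theorem repSemi_sub_msmul (y : Y) (p : P) (f : C₀(Y, ℂ)) :
    repSemi P y (p - modSMul Y p f) = ‖1 - f y‖ * repSemi P y p := by
  -- both sides only see the value `f y`: `p·f` and `f(y) • p` agree at `y`
  have h : repSemi P y (modSMul Y p f - f y • p) = 0 := by
    have h1 : ∀ q : P, modIP Y q (modSMul Y p f - f y • p) y = 0 := by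
      intro q
      have := ip_add_right q (modSMul Y p f - f y • p) (f y • p) y
      rw [sub_add_cancel, ip_msmul_right, ip_smul_right] at this
      linear_combination -this
    rw [repSemi_def, h1]; simp
  have h2 : repSemi P y (p - modSMul Y p f) = repSemi P y ((1 - f y) • p) := by
    have e : (1 - f y) • p = (p - modSMul Y p f) + (modSMul Y p f - f y • p) := by
      rw [sub_smul, one_smul]; abel
    rw [e]
    apply le_antisymm
    · have := map_sub_le_add (repSemi P y) ((p - modSMul Y p f) + (modSMul Y p f - f y • p))
        (modSMul Y p f - f y • p)
      rw [h, add_sub_cancel_right] at this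
      linarith
    · have := map_add_le_add (repSemi P y) (p - modSMul Y p f) (modSMul Y p f - f y • p)
      rw [h] at this
      linarith
  rw [h2, map_smul_eq_mul]

end HilbertModuleBasics

/-! ### Factorization: the fiber seminorm is a norm -/

section Factorization

variable {Y : Type} [TopologicalSpace Y]
variable {P : Type} [NormedAddCommGroup P] [NormedSpace ℂ P] [HilbertCzeroModule Y P]

theorem repSemi_continuous (p : P) : Continuous fun y : Y => repSemi P y p := by
  simp only [repSemi_def]
  exact Real.continuous_sqrt.comp (Complex.continuous_re.comp (modIP Y p p).continuous)

theorem repSemi_tendsto (p : P) : Tendsto (fun y : Y => repSemi P y p) (cocompact Y) (𝓝 0) := by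
  simp only [repSemi_def]
  have h := (modIP Y p p).zero_at_infty'
  have h2 := (Real.continuous_sqrt.comp Complex.continuous_re).tendsto (0 : ℂ)
  simp only [Function.comp_def, Complex.zero_re, Real.sqrt_zero] at h2
  exact h2.comp h

/-- Functional calculus: the function `y ↦ ψ(⟨p,p⟩(y)^{1/2})`, for `ψ` vanishing at `0`. -/
def fcalc (p : P) (ψ : ℝ → ℝ) (hψ : Continuous ψ) (h0 : ψ 0 = 0) : C₀(Y, ℂ) where
  toFun y := (ψ (repSemi P y p) : ℂ)
  continuous_toFun := Complex.continuous_ofReal.comp (hψ.comp (repSemi_continuous p))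
  zero_at_infty' := by
    have h := (Complex.continuous_ofReal.comp hψ).tendsto 0
    have := h.comp (repSemi_tendsto (Y := Y) p)
    simpa [h0, Function.comp_def] using this

@[simp] theorem fcalc_apply (p : P) (ψ : ℝ → ℝ) (hψ : Continuous ψ) (h0 : ψ 0 = 0) (y : Y) :
    fcalc p ψ hψ h0 y = (ψ (repSemi P y p) : ℂ) := rfl

theorem cutoff_continuous {e : ℝ} (he : 0 < e) :
    Continuous fun t : ℝ => √t / (|t| + e ^ 2) := by
  refine Real.continuous_sqrt.div (by fun_prop) fun t => ?_
  positivity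

/-- The functions `t ↦ √t / (t + e²)`, multiplied by `t`, converge to `√t` uniformly on `[0, ∞)` as
`e → 0`; this makes the approximants of the factorization a Cauchy sequence. -/
theorem cutoff_bound {e t : ℝ} (he : 0 < e) (ht : 0 ≤ t) :
    |√t / (|t| + e ^ 2) * t - √t| ≤ e := by
  obtain ⟨s, hs, rfl⟩ : ∃ s : ℝ, 0 ≤ s ∧ t = s ^ 2 := ⟨√t, Real.sqrt_nonneg _, (Real.sq_sqrt ht).symm⟩
  rw [Real.sqrt_sq hs, abs_of_nonneg ht]
  have h : s / (s ^ 2 + e ^ 2) * s ^ 2 - s = -(s * e ^ 2 / (s ^ 2 + e ^ 2)) := by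
    field_simp; ring
  rw [h, abs_neg, abs_of_nonneg (by positivity), div_le_iff₀ (by positivity)]
  nlinarith [mul_nonneg he.le (sq_nonneg (s - e)), mul_nonneg he.le (mul_nonneg hs he.le),
    pow_pos he 3]

/-- The approximants, multiplied by the second factor `√t`, recover the element `p`. -/
theorem cutoff_bound' {e t : ℝ} (he : 0 < e) (ht : 0 ≤ t) :
    |1 - √t / (|t| + e ^ 2) * √t| * t ≤ e ^ 2 := by
  rw [abs_of_nonneg ht, div_mul_eq_mul_div, Real.mul_self_sqrt ht]
  have h : 1 - t / (t + e ^ 2) = e ^ 2 / (t + e ^ 2) := by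
    field_simp; ring
  rw [h, abs_of_nonneg (by positivity), div_mul_eq_mul_div, div_le_iff₀ (by positivity)]
  nlinarith [sq_nonneg (e ^ 2)]

/-- Factorization in Hilbert modules: `p = q · ⟨p,p⟩^{1/4}` with
`q = lim p · ⟨p,p⟩^{1/4} (⟨p,p⟩^{1/2} + ε)⁻¹`.  Consequently the algebraic span `I_y P` is
already closed: it contains every `p` with `⟨p,p⟩(y) = 0`. -/
theorem mem_fiberIdeal_of_repSemi_eq_zero [CompleteSpace P] {y : Y} {p : P}
    (h : repSemi P y p = 0) : p ∈ fiberIdeal Y P y := by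
  let e : ℕ → ℝ := fun n => 1 / ((n : ℝ) + 1)
  have he : ∀ n, 0 < e n := fun n => Nat.one_div_pos_of_nat
  have he0 : Tendsto e atTop (𝓝 0) := tendsto_one_div_add_atTop_nhds_zero_nat
  let g : ℕ → C₀(Y, ℂ) := fun n => fcalc p _ (cutoff_continuous (he n)) (by simp)
  let u : C₀(Y, ℂ) := fcalc p _ Real.continuous_sqrt Real.sqrt_zero
  have hc : CauchySeq fun n => modSMul Y p (g n) := by
    rw [Metric.cauchySeq_iff']
    intro ε hε
    obtain ⟨N, hN⟩ := ((Metric.tendsto_atTop.1 he0) (ε / 4) (by positivity))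
    refine ⟨N, fun n hn => ?_⟩
    have hN' : ∀ n ≥ N, e n < ε / 4 := fun n hn => by
      have := hN n hn
      rwa [Real.dist_0_eq_abs, abs_of_pos (he n)] at this
    rw [dist_eq_norm, ← msmul_sub_right]
    have : ‖modSMul Y p (g n - g N)‖ ≤ ε / 2 := by
      refine norm_msmul_le (by positivity) fun z => ?_
      have h0 : 0 ≤ repSemi P z p := apply_nonneg _ _
      have h1 := cutoff_bound (he n) h0
      have h2 := cutoff_bound (he N) h0
      have h3 : ‖(g n - g N) z‖ * repSemi P z p =
          |(√(repSemi P z p) / (|repSemi P z p| + e n ^ 2) * repSemi P z p - √(repSemi P z p))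
          - (√(repSemi P z p) / (|repSemi P z p| + e N ^ 2) * repSemi P z p
            - √(repSemi P z p))| := by
        rw [ZeroAtInftyContinuousMap.sub_apply, fcalc_apply, fcalc_apply, ← Complex.ofReal_sub,
          Complex.norm_real, Real.norm_eq_abs]
        have habs : ∀ a : ℝ, |a| * repSemi P z p = |a * repSemi P z p| := fun a => by
          rw [abs_mul, abs_of_nonneg h0]
        rw [habs]
        congr 1
        ring
      rw [h3]
      refine (abs_sub _ _).trans ?_
      linarith [hN' n hn, hN' N le_rfl]
    linarith
  obtain ⟨q, hq⟩ := cauchySeq_tendsto_of_complete hc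
  have h1 : Tendsto (fun n => modSMul Y (modSMul Y p (g n)) u) atTop (𝓝 (modSMul Y q u)) := by
    rw [tendsto_iff_norm_sub_tendsto_zero] at hq ⊢
    refine squeeze_zero (fun _ => norm_nonneg _) (fun n => ?_) (by simpa using hq.const_mul ‖u‖)
    rw [← msmul_sub_left]
    exact norm_msmul_le_mul _ _
  have h2 : Tendsto (fun n => modSMul Y (modSMul Y p (g n)) u) atTop (𝓝 p) := by
    rw [tendsto_iff_norm_sub_tendsto_zero]
    refine squeeze_zero (fun _ => norm_nonneg _) (fun n => ?_) (by simpa using he0.pow 2)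
    have hm : modSMul Y (modSMul Y p (g n)) u = modSMul Y p (g n * u) :=
      HilbertCzeroModule.msmul_mul p _ _
    rw [hm, norm_sub_rev]
    refine norm_le_of_repSemi_le (Y := Y) (by positivity) fun z => ?_
    rw [repSemi_sub_msmul, ZeroAtInftyContinuousMap.mul_apply, fcalc_apply, fcalc_apply,
      ← Complex.ofReal_mul, ← Complex.ofReal_one, ← Complex.ofReal_sub, Complex.norm_real,
      Real.norm_eq_abs]
    exact cutoff_bound' (he n) (apply_nonneg _ _)
  rw [tendsto_nhds_unique h2 h1]
  refine Submodule.subset_span ⟨u, q, ?_, rfl⟩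
  simp [u, h]

theorem fibSemi_eq_zero [CompleteSpace P] {y : Y} {v : Fib Y P y} (h : fibSemi P y v = 0) :
    v = 0 := by
  obtain ⟨p, rfl⟩ := fibMk_surj y v
  rw [fibSemi_mk] at h
  exact (Submodule.Quotient.mk_eq_zero _).2 (mem_fiberIdeal_of_repSemi_eq_zero h)

theorem fib_ext_of_fibSemi [CompleteSpace P] {y : Y} {v w : Fib Y P y}
    (h : ∀ ε > 0, fibSemi P y (v - w) ≤ ε) : v = w :=
  sub_eq_zero.1 (fibSemi_eq_zero
    (le_antisymm (le_of_forall_pos_le_add fun ε hε => by simpa using h ε hε) (apply_nonneg _ _)))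

end Factorization

/-! ### Continuous sections of `E_P` -/

section BundleTopology

variable {Y : Type} [TopologicalSpace Y]
variable {P : Type} [NormedAddCommGroup P] [NormedSpace ℂ P] [HilbertCzeroModule Y P]
variable {X : Type} [TopologicalSpace X]

/-- Continuity of a section `v` of `E_P` along a map `b : X → Y`: the map `b` is continuous and
`v` is locally, up to any `ε`, of the form `x ↦ p̂(b x)`. -/
def CtsSec (b : X → Y) (v : (x : X) → Fib Y P (b x)) : Prop :=
  Continuous b ∧ ∀ x₀, ∀ ε > 0, ∃ q : P,
    ∀ᶠ x in 𝓝 x₀, fibSemi P (b x) (v x - fibMk Y P (b x) q) < ε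

theorem CtsSec.continuous_dist {b : X → Y} {v : (x : X) → Fib Y P (b x)} (h : CtsSec b v)
    (p : P) : Continuous fun x => fibSemi P (b x) (v x - fibMk Y P (b x) p) := by
  rw [continuous_iff_continuousAt]
  intro x₀
  rw [ContinuousAt, Metric.tendsto_nhds]
  intro ε hε
  obtain ⟨q, hq⟩ := h.2 x₀ (ε / 4) (by positivity)
  have hc : ContinuousAt (fun x => repSemi P (b x) (q - p)) x₀ :=
    ((repSemi_continuous (q - p)).comp h.1).continuousAt
  have hc' := (Metric.tendsto_nhds.1 hc) (ε / 4) (by positivity)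
  have h0 := hq.self_of_nhds
  have key : ∀ x, fibSemi P (b x) (v x - fibMk Y P (b x) q) < ε / 4 →
      |fibSemi P (b x) (v x - fibMk Y P (b x) p) - repSemi P (b x) (q - p)| < ε / 4 := by
    intro x hx
    refine lt_of_le_of_lt ?_ hx
    have := abs_sub_map_le_sub (fibSemi P (b x)) (v x - fibMk Y P (b x) p) (fibMk Y P (b x) (q - p))
    rw [fibSemi_mk] at this
    refine this.trans (le_of_eq ?_)
    congr 1
    rw [fibMk_sub]; abel
  filter_upwards [hq, hc'] with x hx hx'
  have k1 := key x hx
  have k0 := key x₀ h0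
  rw [Real.dist_eq] at hx' ⊢
  rw [abs_lt] at *
  constructor <;> linarith [k1.1, k1.2, k0.1, k0.2, hx'.1, hx'.2]

/-- `CtsSec` is continuity for the topology of the total space of `E_P`: the distance functions
`x ↦ ‖v(x) - p̂(b x)‖` are continuous, and they define the basic open sets. -/
theorem ctsSec_iff {b : X → Y} {v : (x : X) → Fib Y P (b x)} :
    CtsSec b v ↔ @Continuous X (TotalP Y P) _ (topEP Y P) (fun x => ⟨b x, v x⟩) := by
  constructor
  · intro h
    refine continuous_generateFrom_iff.2 ?_
    rintro _ ⟨U, p, ε, hU, hε, rfl⟩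
    exact (hU.preimage h.1).inter (isOpen_lt (h.continuous_dist p) continuous_const)
  · intro h
    have hop : ∀ (U : Set Y) (p : P) (ε : ℝ), IsOpen U → 0 < ε →
        IsOpen {x : X | b x ∈ U ∧ fibSemi P (b x) (v x - fibMk Y P (b x) p) < ε} := by
      intro U p ε hU hε
      exact continuous_generateFrom_iff.1 h _ ⟨U, p, ε, hU, hε, rfl⟩
    refine ⟨⟨fun U hU => ?_⟩, fun x₀ ε hε => ?_⟩
    · have : b ⁻¹' U = ⋃ n : ℕ, {x : X | b x ∈ U ∧
          fibSemi P (b x) (v x - fibMk Y P (b x) 0) < (n : ℝ) + 1} := by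
        ext x
        simp only [Set.mem_preimage, Set.mem_iUnion, Set.mem_ofPred_eq]
        constructor
        · intro hx
          obtain ⟨n, hn⟩ := exists_nat_gt (fibSemi P (b x) (v x - fibMk Y P (b x) 0))
          exact ⟨n, hx, by linarith⟩
        · rintro ⟨_, hx, _⟩; exact hx
      rw [this]
      exact isOpen_iUnion fun n => hop U 0 _ hU (by positivity)
    · obtain ⟨q, hq⟩ := fibMk_surj (b x₀) (v x₀)
      refine ⟨q, ?_⟩
      filter_upwards [(hop Set.univ q ε isOpen_univ hε).mem_nhds
        ⟨trivial, by rw [hq, sub_self, map_zero]; exact hε⟩] with x hx using hx.2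

theorem CtsSec.hat {b : X → Y} (hb : Continuous b) (p : P) :
    CtsSec b fun x => fibMk Y P (b x) p :=
  ⟨hb, fun x₀ ε hε => ⟨p, Eventually.of_forall fun x => by
    rw [sub_self, map_zero]; exact hε⟩⟩

theorem CtsSec.add {b : X → Y} {v w : (x : X) → Fib Y P (b x)} (hv : CtsSec b v)
    (hw : CtsSec b w) : CtsSec b (v + w) := by
  refine ⟨hv.1, fun x₀ ε hε => ?_⟩
  obtain ⟨p, hp⟩ := hv.2 x₀ (ε / 2) (by positivity)
  obtain ⟨q, hq⟩ := hw.2 x₀ (ε / 2) (by positivity)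
  refine ⟨p + q, ?_⟩
  filter_upwards [hp, hq] with x h1 h2
  have := map_add_le_add (fibSemi P (b x)) (v x - fibMk Y P (b x) p) (w x - fibMk Y P (b x) q)
  rw [Pi.add_apply, fibMk_add, add_sub_add_comm]
  linarith

theorem CtsSec.continuous_norm {b : X → Y} {v : (x : X) → Fib Y P (b x)} (hv : CtsSec b v) :
    Continuous fun x => fibSemi P (b x) (v x) := by
  simpa using hv.continuous_dist 0

theorem CtsSec.smul {b : X → Y} {v : (x : X) → Fib Y P (b x)} (hv : CtsSec b v) {h : X → ℂ}
    (hh : Continuous h) : CtsSec b (fun x => h x • v x) := by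
  refine ⟨hv.1, fun x₀ ε hε => ?_⟩
  obtain ⟨q, hq⟩ := fibMk_surj (b x₀) (v x₀)
  refine ⟨h x₀ • q, ?_⟩
  -- `h v - h(x₀) q̂ = h (v - q̂) + (h - h(x₀)) q̂`, and both terms vanish at `x₀`
  have hc : Continuous fun x => ‖h x‖ * fibSemi P (b x) (v x - fibMk Y P (b x) q) +
      ‖h x - h x₀‖ * repSemi P (b x) q :=
    (hh.norm.mul (hv.continuous_dist q)).add
      ((hh.sub continuous_const).norm.mul ((repSemi_continuous q).comp hv.1))
  have h0 : ‖h x₀‖ * fibSemi P (b x₀) (v x₀ - fibMk Y P (b x₀) q) +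
      ‖h x₀ - h x₀‖ * repSemi P (b x₀) q < ε := by
    rw [hq, sub_self, map_zero, sub_self, norm_zero]; simpa using hε
  filter_upwards [hc.continuousAt.eventually_lt continuousAt_const h0] with x hx
  refine lt_of_le_of_lt ?_ hx
  have e : h x • v x - fibMk Y P (b x) (h x₀ • q) =
      h x • (v x - fibMk Y P (b x) q) + (h x - h x₀) • fibMk Y P (b x) q := by
    rw [fibMk_smul, smul_sub, sub_smul]; abel
  rw [e]
  refine (map_add_le_add _ _ _).trans ?_
  rw [map_smul_eq_mul, map_smul_eq_mul, fibSemi_mk]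

theorem hat_mem_C0SectionsP (p : P) : (fun y => fibMk Y P y p) ∈ C0SectionsP Y P := by
  refine ⟨ctsSec_iff.1 (CtsSec.hat continuous_id p), ?_⟩
  simp only [fibNormQ_mk]
  exact repSemi_tendsto p

end BundleTopology

/-! ### Sections of `r*E_P` and their `L²`-norms -/

section PullbackNorms

variable {Y : Type} [TopologicalSpace Y] {Gp : LCGroupoid Y} (hs : HaarSystem Y Gp)
variable {P : Type} [NormedAddCommGroup P] [NormedSpace ℂ P] [HilbertCzeroModule Y P]

/-- The space of all (not necessarily continuous) sections of `r*E_P`. -/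
abbrev PSec (Gp : LCGroupoid Y) (P : Type) [NormedAddCommGroup P] [NormedSpace ℂ P]
    [HilbertCzeroModule Y P] : Type := (g : Gp.G) → Fib Y P (Gp.r g)

theorem ccPullbackSection_iff (φ : PSec Gp P) : CcPullbackSection P φ ↔
    CtsSec Gp.r φ ∧ ∃ K : Set Gp.G, IsCompact K ∧ ∀ g ∉ K, φ g = 0 := by
  rw [ctsSec_iff]; rfl

theorem cc_add {φ ψ : PSec Gp P} (hφ : CcPullbackSection P φ) (hψ : CcPullbackSection P ψ) :
    CcPullbackSection P (φ + ψ) := by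
  rw [ccPullbackSection_iff] at *
  obtain ⟨h1, K, hK, h2⟩ := hφ
  obtain ⟨h3, L, hL, h4⟩ := hψ
  refine ⟨h1.add h3, K ∪ L, hK.union hL, fun g hg => ?_⟩
  rw [Set.mem_union, not_or] at hg
  rw [Pi.add_apply, h2 g hg.1, h4 g hg.2, add_zero]

theorem cc_smul (c : ℂ) {φ : PSec Gp P} (hφ : CcPullbackSection P φ) :
    CcPullbackSection P (c • φ) := by
  rw [ccPullbackSection_iff] at *
  obtain ⟨h1, K, hK, h2⟩ := hφ
  refine ⟨h1.smul continuous_const, K, hK, fun g hg => ?_⟩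
  rw [Pi.smul_apply, h2 g hg, smul_zero]

theorem cc_sub {φ ψ : PSec Gp P} (hφ : CcPullbackSection P φ) (hψ : CcPullbackSection P ψ) :
    CcPullbackSection P (φ - ψ) := by
  have := cc_add hφ (cc_smul (-1) hψ)
  rwa [neg_one_smul, ← sub_eq_add_neg] at this

/-- The elementary section `g ↦ h(g) p̂(r(g))` of `r*E_P`. -/
def elemSec (h : CcFun Y Gp) (p : P) : PSec Gp P := fun g => h.1 g • fibMk Y P (Gp.r g) p

theorem cc_elem (h : CcFun Y Gp) (p : P) : CcPullbackSection P (elemSec h p) := by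
  rw [ccPullbackSection_iff]
  refine ⟨(CtsSec.hat Gp.r_cont p).smul h.2.1, tsupport h.1, h.2.2, fun g hg => ?_⟩
  rw [elemSec, image_eq_zero_of_notMem_tsupport hg, zero_smul]

theorem cc_zero : CcPullbackSection P (0 : PSec Gp P) := by
  rw [ccPullbackSection_iff]
  exact ⟨CtsSec.hat Gp.r_cont 0, ∅, isCompact_empty, fun _ _ => rfl⟩

theorem cc_norm_cont {φ : PSec Gp P} (hφ : CcPullbackSection P φ) :
    Continuous fun g => fibSemi P (Gp.r g) (φ g) :=
  ((ccPullbackSection_iff φ).1 hφ).1.continuous_norm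

theorem cc_norm_supp {φ : PSec Gp P} (hφ : CcPullbackSection P φ) :
    HasCompactSupport fun g => fibSemi P (Gp.r g) (φ g) := by
  obtain ⟨_, K, hK, h⟩ := (ccPullbackSection_iff φ).1 hφ
  exact HasCompactSupport.intro hK fun g hg => by rw [h g hg, map_zero]

instance (y : Y) : MeasureTheory.IsFiniteMeasureOnCompacts (hs.lam y) :=
  ⟨fun _ hK => (hs.finiteOnCompacts y _ hK).lt_top⟩

/-- The `L²(λ^y)`-norm of a section of `r*E_P`. -/
def L2 (y : Y) (φ : PSec Gp P) : ℝ := √(∫ g, fibSemi P (Gp.r g) (φ g) ^ 2 ∂(hs.lam y))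

theorem integrable_mul_of_cc (y : Y) {a b : Gp.G → ℝ} (ha : Continuous a) (hb : Continuous b)
    (hsa : HasCompactSupport a) : MeasureTheory.Integrable (fun g => a g * b g) (hs.lam y) :=
  (ha.mul hb).integrable_of_hasCompactSupport hsa.mul_right

theorem L2_nonneg (y : Y) (φ : PSec Gp P) : 0 ≤ L2 hs y φ := Real.sqrt_nonneg _

theorem sq_int_nonneg (y : Y) (φ : PSec Gp P) :
    0 ≤ ∫ g, fibSemi P (Gp.r g) (φ g) ^ 2 ∂(hs.lam y) :=
  MeasureTheory.integral_nonneg fun _ => sq_nonneg _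

theorem L2_le_iff (y : Y) (φ : PSec Gp P) {C : ℝ} (hC : 0 ≤ C) :
    L2 hs y φ ≤ C ↔ ∫ g, fibSemi P (Gp.r g) (φ g) ^ 2 ∂(hs.lam y) ≤ C ^ 2 :=
  Real.sqrt_le_left hC

theorem L2_sq (y : Y) (φ : PSec Gp P) :
    L2 hs y φ ^ 2 = ∫ g, fibSemi P (Gp.r g) (φ g) ^ 2 ∂(hs.lam y) :=
  Real.sq_sqrt (sq_int_nonneg hs y φ)

theorem L2_smul (y : Y) (c : ℂ) (φ : PSec Gp P) : L2 hs y (c • φ) = ‖c‖ * L2 hs y φ := by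
  have : ∀ g, fibSemi P (Gp.r g) ((c • φ) g) ^ 2 = ‖c‖ ^ 2 * fibSemi P (Gp.r g) (φ g) ^ 2 := by
    intro g; rw [Pi.smul_apply, map_smul_eq_mul, mul_pow]
  rw [L2, L2]
  simp_rw [this]
  rw [MeasureTheory.integral_const_mul, Real.sqrt_mul (by positivity),
    Real.sqrt_sq (norm_nonneg _)]

theorem L2_add_le (y : Y) {φ ψ : PSec Gp P} (hφ : CcPullbackSection P φ)
    (hψ : CcPullbackSection P ψ) : L2 hs y (φ + ψ) ≤ L2 hs y φ + L2 hs y ψ := by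
  set a := fun g => fibSemi P (Gp.r g) (φ g) with ha
  set b := fun g => fibSemi P (Gp.r g) (ψ g) with hb
  have ca := cc_norm_cont hφ
  have cb := cc_norm_cont hψ
  have sa := cc_norm_supp hφ
  have sb := cc_norm_supp hψ
  have iaa : MeasureTheory.Integrable (fun g => a g * a g) (hs.lam y) :=
    integrable_mul_of_cc hs y ca ca sa
  have iab : MeasureTheory.Integrable (fun g => a g * b g) (hs.lam y) :=
    integrable_mul_of_cc hs y ca cb sa
  have ibb : MeasureTheory.Integrable (fun g => b g * b g) (hs.lam y) :=
    integrable_mul_of_cc hs y cb cb sb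
  have hA : L2 hs y φ ^ 2 = ∫ g, a g * a g ∂(hs.lam y) := by
    rw [L2_sq]; simp only [ha, sq]
  have hB : L2 hs y ψ ^ 2 = ∫ g, b g * b g ∂(hs.lam y) := by
    rw [L2_sq]; simp only [hb, sq]
  -- Cauchy-Schwarz, from nonnegativity of `∫ (B a - A b)²`
  have hCS : ∫ g, a g * b g ∂(hs.lam y) ≤ L2 hs y φ * L2 hs y ψ := by
    set A := L2 hs y φ
    set B := L2 hs y ψ
    set I := ∫ g, a g * b g ∂(hs.lam y)
    have hA0 : 0 ≤ A := L2_nonneg hs y φ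
    have hB0 : 0 ≤ B := L2_nonneg hs y ψ
    have hq : ∀ s t : ℝ, 0 ≤ s ^ 2 * A ^ 2 - 2 * (s * t) * I + t ^ 2 * B ^ 2 := by
      intro s t
      have h0 : 0 ≤ ∫ g, (s * a g - t * b g) ^ 2 ∂(hs.lam y) :=
        MeasureTheory.integral_nonneg fun _ => sq_nonneg _
      have e : ∀ g, (s * a g - t * b g) ^ 2 =
          s ^ 2 * (a g * a g) - 2 * (s * t) * (a g * b g) + t ^ 2 * (b g * b g) := by
        intro g; ring
      simp_rw [e] at h0
      have i1 : MeasureTheory.Integrable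
          (fun g => s ^ 2 * (a g * a g) - 2 * (s * t) * (a g * b g)) (hs.lam y) :=
        (iaa.const_mul _).sub (iab.const_mul _)
      rw [MeasureTheory.integral_add i1 (ibb.const_mul _),
        MeasureTheory.integral_sub (iaa.const_mul _) (iab.const_mul _),
        MeasureTheory.integral_const_mul, MeasureTheory.integral_const_mul,
        MeasureTheory.integral_const_mul] at h0
      rw [hA, hB]
      exact h0
    refine le_of_forall_pos_le_add fun ε hε => ?_
    by_cases hAB : A * B = 0
    · by_contra! hI
      have hI0 : 0 < I := by nlinarith
      rcases mul_eq_zero.1 hAB with h | h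
      · have := hq (B ^ 2 / I + 1 / I) 1
        rw [h] at this
        have e : 2 * ((B ^ 2 / I + 1 / I) * 1) * I = 2 * B ^ 2 + 2 := by field_simp
        nlinarith [sq_nonneg B]
      · have := hq 1 (A ^ 2 / I + 1 / I)
        rw [h] at this
        have e : 2 * (1 * (A ^ 2 / I + 1 / I)) * I = 2 * A ^ 2 + 2 := by field_simp
        nlinarith [sq_nonneg A]
    · have hpos : 0 < A * B := lt_of_le_of_ne (mul_nonneg hA0 hB0) (Ne.symm hAB)
      have := hq B A
      have h2 : (A * B) * I ≤ (A * B) * (A * B) := by nlinarith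
      linarith [le_of_mul_le_mul_left h2 hpos]
  rw [L2_le_iff hs y _ (add_nonneg (L2_nonneg hs y φ) (L2_nonneg hs y ψ))]
  have i2 : MeasureTheory.Integrable (fun g => a g * a g + 2 * (a g * b g)) (hs.lam y) :=
    iaa.add (iab.const_mul 2)
  have h1 : ∫ g, fibSemi P (Gp.r g) ((φ + ψ) g) ^ 2 ∂(hs.lam y) ≤
      ∫ g, (a g * a g + 2 * (a g * b g)) + b g * b g ∂(hs.lam y) := by
    refine MeasureTheory.integral_mono_of_nonneg (Eventually.of_forall fun _ => sq_nonneg _)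
      (i2.add ibb) (Eventually.of_forall fun g => ?_)
    have h := map_add_le_add (fibSemi P (Gp.r g)) (φ g) (ψ g)
    have h0 : 0 ≤ fibSemi P (Gp.r g) (φ g + ψ g) := apply_nonneg _ _
    calc fibSemi P (Gp.r g) ((φ + ψ) g) ^ 2 ≤ (a g + b g) ^ 2 := by
          rw [Pi.add_apply]; exact pow_le_pow_left₀ h0 h 2
      _ = _ := by ring
  rw [MeasureTheory.integral_add i2 ibb,
    MeasureTheory.integral_add iaa (iab.const_mul 2), MeasureTheory.integral_const_mul,
    ← hA, ← hB] at h1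
  nlinarith

theorem L2_sub_comm (y : Y) (φ ψ : PSec Gp P) : L2 hs y (φ - ψ) = L2 hs y (ψ - φ) := by
  have := L2_smul hs y (-1) (ψ - φ)
  rw [neg_one_smul, neg_sub] at this
  simpa using this

theorem L2_le_add (y : Y) {φ ψ : PSec Gp P} (hφ : CcPullbackSection P φ)
    (hψ : CcPullbackSection P ψ) : L2 hs y φ ≤ L2 hs y (φ - ψ) + L2 hs y ψ := by
  have := L2_add_le hs y (cc_sub hφ hψ) hψ
  rwa [sub_add_cancel] at this

end PullbackNorms

/-! ### Sesquilinear sums -/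

section SesquilinearSums

variable {Y : Type} [TopologicalSpace Y]
variable {P : Type} [NormedAddCommGroup P] [NormedSpace ℂ P] [HilbertCzeroModule Y P]

theorem ip_sum_right {ι : Type*} (s : Finset ι) (p : P) (q : ι → P) (y : Y) :
    modIP Y p (∑ i ∈ s, q i) y = ∑ i ∈ s, modIP Y p (q i) y :=
  map_sum (AddMonoidHom.mk' (fun q => modIP Y p q y) fun a b => ip_add_right p a b y) q s

theorem ip_sum_left {ι : Type*} (s : Finset ι) (p : P) (q : ι → P) (y : Y) :
    modIP Y (∑ i ∈ s, q i) p y = ∑ i ∈ s, modIP Y (q i) p y := by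
  rw [ip_conj, ip_sum_right, map_sum]
  exact Finset.sum_congr rfl fun i _ => (ip_conj _ _ _).symm

theorem ip_smul_left (c : ℂ) (p q : P) (y : Y) :
    modIP Y (c • p) q y = conj c * modIP Y p q y := by
  rw [ip_conj, ip_smul_right, map_mul, ← ip_conj]

end SesquilinearSums

/-! ### Elementary sections -/

section Elementary

variable {Y : Type} [TopologicalSpace Y] {Gp : LCGroupoid Y} {hs : HaarSystem Y Gp}
variable {P : Type} [NormedAddCommGroup P] [NormedSpace ℂ P] [HilbertCzeroModule Y P]
variable {PG : Type} [NormedAddCommGroup PG] [NormedSpace ℂ PG] [HilbertCzeroModule Y PG]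
variable {R : Type} [NormedAddCommGroup R] [NormedSpace ℂ R] [HilbertCzeroModule Y R]
variable (td : TensorData Y P PG R) (d : PGData Gp hs PG)

/-- The pairs `(∑ᵢ hᵢ p̂ᵢ, ∑ᵢ pᵢ ⊗ hᵢ)`: elementary sections of `r*E_P` together with the
elements of `P ⊗ P_G` they stand for. -/
def elemPairs : Submodule ℂ (PSec Gp P × R) :=
  Submodule.span ℂ (Set.range fun hp : CcFun Y Gp × P =>
    (elemSec hp.1 hp.2, td.t hp.2 (d.emb hp.1)))

theorem elemPairs_normal {w : PSec Gp P × R} (hw : w ∈ elemPairs td d) :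
    ∃ (n : ℕ) (h : Fin n → CcFun Y Gp) (p : Fin n → P),
      w.1 = ∑ i, elemSec (h i) (p i) ∧ w.2 = ∑ i, td.t (p i) (d.emb (h i)) := by
  obtain ⟨n, c, g, rfl⟩ := Submodule.mem_span_set'.1 hw
  have hg : ∀ i, ∃ hp : CcFun Y Gp × P,
      (elemSec hp.1 hp.2, td.t hp.2 (d.emb hp.1)) = (g i : PSec Gp P × R) := fun i => (g i).2
  choose hp hhp using hg
  refine ⟨n, fun i => (hp i).1, fun i => c i • (hp i).2, ?_, ?_⟩
  · rw [Prod.fst_sum]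
    refine Finset.sum_congr rfl fun i _ => ?_
    rw [← hhp]
    funext k
    change c i • ((hp i).1.1 k • fibMk Y P (Gp.r k) (hp i).2) =
      (hp i).1.1 k • (c i • fibMk Y P (Gp.r k) (hp i).2)
    rw [smul_comm]
  · rw [Prod.snd_sum]
    refine Finset.sum_congr rfl fun i _ => ?_
    rw [← hhp, td.t_csmul_left]
    rfl

theorem mem_elemPairs {n : ℕ} (h : Fin n → CcFun Y Gp) (p : Fin n → P) :
    ((∑ i, elemSec (h i) (p i) : PSec Gp P), ∑ i, td.t (p i) (d.emb (h i))) ∈ elemPairs td d := by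
  have : ((∑ i, elemSec (h i) (p i) : PSec Gp P), ∑ i, td.t (p i) (d.emb (h i))) =
      ∑ i, ((elemSec (h i) (p i) : PSec Gp P), td.t (p i) (d.emb (h i))) := by
    ext1
    · rw [Prod.fst_sum]
    · rw [Prod.snd_sum]
  rw [this]
  exact Submodule.sum_mem _ fun i _ => Submodule.subset_span ⟨(h i, p i), rfl⟩

theorem cc_of_elemPairs {w : PSec Gp P × R} (hw : w ∈ elemPairs td d) :
    CcPullbackSection P w.1 := by
  induction hw using Submodule.span_induction with
  | mem x hx => obtain ⟨hp, rfl⟩ := hx; exact cc_elem _ _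
  | zero => exact cc_zero
  | add x z _ _ hx hz => exact cc_add hx hz
  | smul c x _ hx => exact cc_smul c hx

theorem sum_elem_apply {n : ℕ} (h : Fin n → CcFun Y Gp) (p : Fin n → P) (g : Gp.G) :
    (∑ i, elemSec (h i) (p i) : PSec Gp P) g = ∑ i, (h i).1 g • fibMk Y P (Gp.r g) (p i) := by
  rw [Finset.sum_apply]; rfl

/-- `‖∑ᵢ pᵢ ⊗ hᵢ‖_y² = ∑ᵢⱼ ⟨pᵢ,pⱼ⟩(y) ∫ h̄ᵢ hⱼ dλ^y = ∫ ‖∑ᵢ hᵢ p̂ᵢ‖² dλ^y`, because `λ^y` is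
concentrated on `r⁻¹(y)`. -/
theorem elemPairs_norm {w : PSec Gp P × R} (hw : w ∈ elemPairs td d) (y : Y) :
    L2 hs y w.1 = repSemi R y w.2 := by
  obtain ⟨n, h, p, h1, h2⟩ := elemPairs_normal td d hw
  rw [h1, h2]
  refine (pow_left_inj₀ (L2_nonneg _ _ _) (apply_nonneg _ _) two_ne_zero).1 ?_
  rw [L2_sq]
  apply Complex.ofReal_injective
  rw [← ip_self_eq, ← integral_complex_ofReal]
  have hae : ∀ᵐ g ∂(hs.lam y), Gp.r g = y := hs.concentrated y
  have e1 : ∫ g, ((fibSemi P (Gp.r g) ((∑ i, elemSec (h i) (p i) : PSec Gp P) g) ^ 2 : ℝ) : ℂ)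
      ∂(hs.lam y) = ∫ g, ∑ j, ∑ i, conj ((h i).1 g) * (h j).1 g * modIP Y (p i) (p j) y
      ∂(hs.lam y) := by
    refine MeasureTheory.integral_congr_ae ?_
    filter_upwards [hae] with g hg
    subst hg
    rw [sum_elem_apply]
    simp_rw [← fibMk_smul]
    rw [← fibMk_sum, fibSemi_mk, ← ip_self_eq, ip_sum_right]
    refine Finset.sum_congr rfl fun j _ => ?_
    rw [ip_sum_left]
    refine Finset.sum_congr rfl fun i _ => ?_
    rw [ip_smul_left, ip_smul_right]; ring
  have h_int : ∀ i j, MeasureTheory.Integrable (fun g => conj ((h i).1 g) * (h j).1 g)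
      (hs.lam y) := fun i j =>
    ((Complex.continuous_conj.comp (h i).2.1).mul (h j).2.1).integrable_of_hasCompactSupport
      ((h j).2.2.mul_left)
  rw [e1, MeasureTheory.integral_finsetSum _ fun j _ =>
    MeasureTheory.integrable_finsetSum _ fun i _ => (h_int i j).mul_const _, ip_sum_right]
  refine Finset.sum_congr rfl fun j _ => ?_
  rw [MeasureTheory.integral_finsetSum _ fun i _ => (h_int i j).mul_const _, ip_sum_left]
  refine Finset.sum_congr rfl fun i _ => ?_
  rw [MeasureTheory.integral_mul_const, td.t_inner, ZeroAtInftyContinuousMap.mul_apply,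
    d.emb_inner, mul_comm]

end Elementary

/-! ### Approximation and representation of sections -/

section Approximation

variable {Y : Type} [TopologicalSpace Y] {Gp : LCGroupoid Y} {hs : HaarSystem Y Gp}
variable {P : Type} [NormedAddCommGroup P] [NormedSpace ℂ P] [HilbertCzeroModule Y P]
variable {PG : Type} [NormedAddCommGroup PG] [NormedSpace ℂ PG] [HilbertCzeroModule Y PG]
variable {R : Type} [NormedAddCommGroup R] [NormedSpace ℂ R] [HilbertCzeroModule Y R]
variable (td : TensorData Y P PG R) (d : PGData Gp hs PG)

/-- The Haar system is bounded on compactly supported functions: `y ↦ ∫ χ dλ^y` is continuous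
and vanishes off the compact set `r(supp χ)`. -/
theorem exists_haar_bound [T2Space Y] (hs : HaarSystem Y Gp) {χ : Gp.G → ℝ} (hχ : Continuous χ)
    (hχs : HasCompactSupport χ) : ∃ M : ℝ, ∀ y, ∫ g, χ g ∂(hs.lam y) ≤ M := by
  have hc : Continuous fun y => ∫ g, (χ g : ℂ) ∂(hs.lam y) :=
    hs.integral_continuous _ (Complex.continuous_ofReal.comp hχ)
      (hχs.comp_left (g := Complex.ofReal) Complex.ofReal_zero)
  have hsup : HasCompactSupport fun y => ∫ g, (χ g : ℂ) ∂(hs.lam y) := by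
    refine HasCompactSupport.intro (hχs.isCompact.image Gp.r_cont) fun y hy => ?_
    have hae : ∀ᵐ g ∂(hs.lam y), Gp.r g = y := hs.concentrated y
    refine MeasureTheory.integral_eq_zero_of_ae ?_
    filter_upwards [hae] with g hg
    have : χ g = 0 := image_eq_zero_of_notMem_tsupport fun h => hy ⟨g, h, hg⟩
    rw [this]; rfl
  obtain ⟨M, hM⟩ := hc.bounded_above_of_compact_support hsup
  refine ⟨M, fun y => ?_⟩
  have h := hM y
  rw [integral_complex_ofReal, Complex.norm_real] at h
  exact (le_abs_self _).trans h

/-- Elementary sections are dense in `C_c(G, r*E_P)`, uniformly in the norms of `L²(λ^y)`: by a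
partition of unity, every `φ` is within `ε' χ` of some `∑ᵢ hᵢ p̂ᵢ`, with `χ` a fixed cutoff. -/
theorem exists_elemPairs_approx [T2Space Y] {φ : PSec Gp P} (hφ : CcPullbackSection P φ) {ε : ℝ}
    (hε : 0 < ε) : ∃ w ∈ elemPairs td d, ∀ y : Y, L2 hs y (φ - w.1) ≤ ε := by
  obtain ⟨hφc, K, hK, hφK⟩ := (ccPullbackSection_iff φ).1 hφ
  obtain ⟨χ, hχ1, -, hχs, hχ⟩ := exists_continuous_one_zero_of_isCompact hK isClosed_empty
    (Set.disjoint_empty K)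
  obtain ⟨M, hM⟩ := exists_haar_bound hs χ.continuous hχs
  obtain ⟨e, he, heM⟩ : ∃ e : ℝ, 0 < e ∧ e ^ 2 * M ≤ ε ^ 2 := by
    refine ⟨ε / √(|M| + 1), by positivity, ?_⟩
    rw [div_pow, Real.sq_sqrt (by positivity), div_mul_eq_mul_div, div_le_iff₀ (by positivity)]
    have := le_abs_self M
    gcongr
    linarith
  choose q hq using fun g => fibMk_surj (Gp.r g) (φ g)
  let V : Gp.G → Set Gp.G := fun g₀ =>
    {g | fibSemi P (Gp.r g) (φ g - fibMk Y P (Gp.r g) (q g₀)) < e}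
  have hVo : ∀ g₀, IsOpen (V g₀) := fun g₀ =>
    isOpen_lt (hφc.continuous_dist (q g₀)) continuous_const
  have hVm : ∀ g₀, g₀ ∈ V g₀ := fun g₀ => by
    change fibSemi P _ _ < e
    rw [hq, sub_self, map_zero]; exact he
  obtain ⟨t, ht⟩ := hχs.isCompact.elim_finite_subcover V hVo
    fun g _ => Set.mem_iUnion.2 ⟨g, hVm g⟩
  let σ : Fin t.card ≃ t := t.equivFin.symm
  have hcov : tsupport χ ⊆ ⋃ i : Fin t.card, V (σ i) := by
    intro g hg
    obtain ⟨g₀, hg₀, hgV⟩ := Set.mem_iUnion₂.1 (ht hg)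
    exact Set.mem_iUnion.2 ⟨σ.symm ⟨g₀, hg₀⟩, by simpa using hgV⟩
  obtain ⟨f, hfV, hf1, hf01, -⟩ := exists_continuous_sum_one_of_isOpen_isCompact
    (fun i => hVo (σ i)) hχs.isCompact hcov
  let h : Fin t.card → CcFun Y Gp := fun i =>
    ⟨fun g => ((χ g * f i g : ℝ) : ℂ), by fun_prop,
      (hχs.mul_right (f' := f i)).comp_left (g := Complex.ofReal) Complex.ofReal_zero⟩
  let p : Fin t.card → P := fun i => q (σ i)
  refine ⟨_, mem_elemPairs td d h p, fun y => ?_⟩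
  have key : ∀ g, fibSemi P (Gp.r g) ((φ - ∑ i, elemSec (h i) (p i)) g) ≤ e * χ g := by
    intro g
    rw [Pi.sub_apply, sum_elem_apply]
    by_cases hg : g ∈ tsupport χ
    · have hsum : ∑ i, f i g = 1 := by simpa using hf1 hg
      have hφχ : φ g = (χ g : ℂ) • φ g := by
        by_cases hgK : g ∈ K
        · have := hχ1 hgK
          rw [this]; simp
        · rw [hφK g hgK, smul_zero]
      have e1 : φ g - ∑ i, (h i).1 g • fibMk Y P (Gp.r g) (p i) =
          ∑ i, ((χ g * f i g : ℝ) : ℂ) • (φ g - fibMk Y P (Gp.r g) (p i)) := by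
        simp_rw [smul_sub]
        rw [Finset.sum_sub_distrib, ← Finset.sum_smul]
        congr 1
        rw [← Complex.ofReal_sum, ← Finset.mul_sum, hsum, mul_one]
        exact hφχ
      rw [e1]
      calc _ ≤ ∑ i, fibSemi P (Gp.r g)
            (((χ g * f i g : ℝ) : ℂ) • (φ g - fibMk Y P (Gp.r g) (p i))) :=
            Finset.le_sum_of_subadditive _ (map_zero (fibSemi P (Gp.r g))).le (map_add_le_add (fibSemi P (Gp.r g))) _ _
        _ ≤ ∑ i, (χ g * f i g) * e := by
            refine Finset.sum_le_sum fun i _ => ?_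
            rw [map_smul_eq_mul, Complex.norm_real, Real.norm_eq_abs,
              abs_of_nonneg (mul_nonneg (hχ g).1 (hf01 i g).1)]
            by_cases hi : f i g = 0
            · rw [hi]; simp
            · have : g ∈ V (σ i) := hfV i (subset_tsupport _ hi)
              exact mul_le_mul_of_nonneg_left (le_of_lt this)
                (mul_nonneg (hχ g).1 (hf01 i g).1)
        _ = e * χ g := by
            rw [← Finset.sum_mul, ← Finset.mul_sum, hsum]; ring
    · have hχ0 : χ g = 0 := image_eq_zero_of_notMem_tsupport hg
      have hgK : g ∉ K := fun hgK => by
        have := hχ1 hgK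
        rw [hχ0] at this
        exact zero_ne_one this
      have : ∀ i, (h i).1 g = 0 := fun i => by
        change ((χ g * f i g : ℝ) : ℂ) = 0
        rw [hχ0]; simp
      simp_rw [this, zero_smul]
      rw [hφK g hgK, Finset.sum_const_zero, sub_zero, map_zero, hχ0, mul_zero]
  rw [L2_le_iff hs y _ hε.le]
  have h_int : MeasureTheory.Integrable χ (hs.lam y) :=
    χ.continuous.integrable_of_hasCompactSupport hχs
  calc _ ≤ ∫ g, e ^ 2 * χ g ∂(hs.lam y) := by
        refine MeasureTheory.integral_mono_of_nonneg (Eventually.of_forall fun _ => sq_nonneg _)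
          (h_int.const_mul _) (Eventually.of_forall fun g => ?_)
        change _ ^ 2 ≤ _
        have h0 := (hχ g).1
        have h1 := (hχ g).2
        calc _ ≤ (e * χ g) ^ 2 := pow_le_pow_left₀ (apply_nonneg _ _) (key g) 2
          _ ≤ e ^ 2 * χ g := by
            rw [mul_pow]
            refine mul_le_mul_of_nonneg_left ?_ (sq_nonneg e)
            nlinarith
    _ = e ^ 2 * ∫ g, χ g ∂(hs.lam y) := MeasureTheory.integral_const_mul _ _
    _ ≤ e ^ 2 * M := mul_le_mul_of_nonneg_left (hM y) (sq_nonneg e)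
    _ ≤ ε ^ 2 := heM

theorem L2_zero (hs : HaarSystem Y Gp) (y : Y) : L2 hs y (0 : PSec Gp P) = 0 := by
  have := L2_smul hs y 0 (0 : PSec Gp P)
  simpa using this

/-- `Rep` is the relation that `x ∈ P ⊗ P_G` represents `φ ∈ C_c(G, r*E_P)`: `φ` and `x` have common
approximations by elementary sections. -/
def Rep : Submodule ℂ (PSec Gp P × R) where
  carrier := {w | CcPullbackSection P w.1 ∧ ∀ ε > 0, ∃ e ∈ elemPairs td d,
    (∀ y : Y, L2 hs y (w.1 - e.1) ≤ ε) ∧ ∀ y : Y, repSemi R y (w.2 - e.2) ≤ ε}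
  zero_mem' := by
    refine ⟨cc_zero, fun ε hε => ⟨0, zero_mem _, fun y => ?_, fun y => ?_⟩⟩
    · rw [sub_self, L2_zero]; exact hε.le
    · rw [sub_self, map_zero]; exact hε.le
  add_mem' := by
    rintro w w' ⟨hc, hw⟩ ⟨hc', hw'⟩
    refine ⟨cc_add hc hc', fun ε hε => ?_⟩
    obtain ⟨e, he, h1, h2⟩ := hw (ε / 2) (by positivity)
    obtain ⟨e', he', h1', h2'⟩ := hw' (ε / 2) (by positivity)
    refine ⟨e + e', add_mem he he', fun y => ?_, fun y => ?_⟩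
    · have := L2_add_le (P := P) hs y (cc_sub hc (cc_of_elemPairs td d he))
        (cc_sub hc' (cc_of_elemPairs td d he'))
      rw [Prod.fst_add, Prod.fst_add, add_sub_add_comm]
      linarith [h1 y, h1' y]
    · rw [Prod.snd_add, Prod.snd_add, add_sub_add_comm]
      have := map_add_le_add (repSemi R y) (w.2 - e.2) (w'.2 - e'.2)
      linarith [h2 y, h2' y]
  smul_mem' := by
    rintro c w ⟨hc, hw⟩
    refine ⟨cc_smul c hc, fun ε hε => ?_⟩
    have hpos : 0 < ‖c‖ + 1 := by positivity
    obtain ⟨e, he, h1, h2⟩ := hw (ε / (‖c‖ + 1)) (by positivity)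
    have hb : ‖c‖ * (ε / (‖c‖ + 1)) ≤ ε := by
      rw [mul_div_assoc', div_le_iff₀ hpos]; nlinarith [norm_nonneg c]
    refine ⟨c • e, Submodule.smul_mem _ _ he, fun y => ?_, fun y => ?_⟩
    · rw [Prod.smul_fst, Prod.smul_fst, ← smul_sub, L2_smul]
      exact (mul_le_mul_of_nonneg_left (h1 y) (norm_nonneg c)).trans hb
    · rw [Prod.smul_snd, Prod.smul_snd, ← smul_sub, map_smul_eq_mul]
      exact (mul_le_mul_of_nonneg_left (h2 y) (norm_nonneg c)).trans hb

theorem mem_rep {w : PSec Gp P × R} : w ∈ Rep td d ↔ CcPullbackSection P w.1 ∧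
    ∀ ε > 0, ∃ e ∈ elemPairs td d,
      (∀ y : Y, L2 hs y (w.1 - e.1) ≤ ε) ∧ ∀ y : Y, repSemi R y (w.2 - e.2) ≤ ε := Iff.rfl

theorem elemPairs_le_rep {w : PSec Gp P × R} (hw : w ∈ elemPairs td d) : w ∈ Rep td d := by
  refine (mem_rep td d).2 ⟨cc_of_elemPairs td d hw, fun ε hε => ⟨w, hw, fun y => ?_, fun y => ?_⟩⟩
  · rw [sub_self, L2_zero]; exact hε.le
  · rw [sub_self, map_zero]; exact hε.le

theorem rep_norm {w : PSec Gp P × R} (hw : w ∈ Rep td d) (y : Y) :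
    L2 hs y w.1 = repSemi R y w.2 := by
  rw [mem_rep] at hw
  refine eq_of_forall_dist_le fun ε hε => ?_
  obtain ⟨e, he, h1, h2⟩ := hw.2 (ε / 2) (by positivity)
  have hce := cc_of_elemPairs td d he
  have a1 := L2_le_add hs y hw.1 hce
  have a2 := L2_le_add hs y hce hw.1
  rw [L2_sub_comm] at a2
  have a3 := elemPairs_norm td d he y
  have a4 := abs_sub_map_le_sub (repSemi R y) w.2 e.2
  have h1 := h1 y
  have h2 := h2 y
  rw [Real.dist_eq, abs_le]
  rw [abs_le] at a4
  constructor <;> linarith [a4.1, a4.2]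

/-- Every `φ ∈ C_c(G, r*E_P)` is represented by an element of `P ⊗ P_G`, by completeness. -/
theorem exists_rep [T2Space Y] [CompleteSpace R] {φ : PSec Gp P} (hφ : CcPullbackSection P φ) :
    ∃ z : R, (φ, z) ∈ Rep td d := by
  let u : ℕ → ℝ := fun n => 1 / ((n : ℝ) + 1)
  have hu : ∀ n, 0 < u n := fun n => Nat.one_div_pos_of_nat
  have hu0 : Tendsto u atTop (𝓝 0) := tendsto_one_div_add_atTop_nhds_zero_nat
  choose w hw hwφ using fun n => exists_elemPairs_approx td d hφ (hu n)
  have hd : ∀ m n, ‖(w m).2 - (w n).2‖ ≤ u m + u n := by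
    intro m n
    refine norm_le_of_repSemi_le (Y := Y) (add_pos (hu m) (hu n)).le fun y => ?_
    have hmn := elemPairs_norm td d (sub_mem (hw m) (hw n)) y
    rw [Prod.snd_sub, Prod.fst_sub] at hmn
    rw [← hmn]
    have a := L2_add_le hs y (cc_sub (cc_of_elemPairs td d (hw m)) hφ)
      (cc_sub hφ (cc_of_elemPairs td d (hw n)))
    rw [sub_add_sub_cancel, L2_sub_comm hs y _ φ] at a
    linarith [hwφ m y, hwφ n y]
  have hcau : CauchySeq fun n => (w n).2 := by
    refine cauchySeq_of_le_tendsto_0' (fun n => 2 * u n) (fun n m hnm => ?_)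
      (by simpa using hu0.const_mul 2)
    rw [dist_eq_norm]
    have : u m ≤ u n := one_div_le_one_div_of_le (by positivity) (by gcongr)
    linarith [hd n m]
  obtain ⟨z, hz⟩ := cauchySeq_tendsto_of_complete hcau
  refine ⟨z, (mem_rep td d).2 ⟨hφ, fun ε hε => ?_⟩⟩
  have h1 : ∀ᶠ n in atTop, u n < ε := hu0.eventually_lt_const hε
  have h2 : ∀ᶠ n in atTop, dist (w n).2 z < ε := Metric.tendsto_nhds.1 hz ε hε
  obtain ⟨n, hn1, hn2⟩ := (h1.and h2).exists
  refine ⟨w n, hw n, fun y => (hwφ n y).trans hn1.le, fun y => ?_⟩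
  refine (repSemi_le_norm y _).trans ?_
  rw [← dist_eq_norm, dist_comm]
  exact hn2.le

theorem rep_iff_representsHat {φ : PSec Gp P} {x : R} :
    (φ, x) ∈ Rep td d ↔ CcPullbackSection P φ ∧
      RepresentsHat hs P PG R td d φ (fun y => fibMk Y R y x) := by
  rw [mem_rep]
  refine and_congr_right fun _ => ?_
  constructor
  · intro hw
    refine ⟨hat_mem_C0SectionsP x, fun ε hε => ?_⟩
    obtain ⟨e, he, h1, h2⟩ := hw ε hε
    obtain ⟨n, h, p, e1, e2⟩ := elemPairs_normal td d he
    refine ⟨n, h, p, fun y => ?_, fun y => ?_⟩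
    · have := (L2_le_iff hs y _ hε.le).1 (h1 y)
      rw [e1] at this
      simp_rw [Pi.sub_apply, sum_elem_apply] at this
      exact this
    · have := h2 y
      rw [e2] at this
      rw [← fibMk_sub, fibNormQ_mk]
      exact this
  · rintro ⟨-, hw⟩ ε hε
    obtain ⟨n, h, p, h1, h2⟩ := hw ε hε
    refine ⟨_, mem_elemPairs td d h p, fun y => ?_, fun y => ?_⟩
    · rw [L2_le_iff hs y _ hε.le]
      simp_rw [Pi.sub_apply, sum_elem_apply]
      exact h1 y
    · have := h2 y
      rw [← fibMk_sub, fibNormQ_mk] at this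
      exact this

theorem norm_tensor_le (p : P) (q : PG) : ‖td.t p q‖ ≤ ‖p‖ * ‖q‖ := by
  refine norm_le_of_repSemi_le (Y := Y) (by positivity) fun y => ?_
  have h : repSemi R y (td.t p q) ^ 2 = (repSemi P y p * repSemi PG y q) ^ 2 := by
    have h1 := ip_self_eq y (td.t p q)
    rw [td.t_inner, ZeroAtInftyContinuousMap.mul_apply, ip_self_eq, ip_self_eq,
      ← Complex.ofReal_mul] at h1
    rw [mul_pow]
    exact (Complex.ofReal_injective h1).symm
  rw [(pow_left_inj₀ (apply_nonneg _ _) (mul_nonneg (apply_nonneg _ _) (apply_nonneg _ _))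
    two_ne_zero).1 h]
  have h1 := repSemi_le_norm y p
  have h2 := repSemi_le_norm y q
  gcongr

theorem tensor_sub_right (p : P) (q q' : PG) : td.t p (q - q') = td.t p q - td.t p q' := by
  have := td.t_add_right p (q - q') q'
  rw [sub_add_cancel] at this
  rw [this, add_sub_cancel_right]

/-- Follows from the density of the simple tensors in `P ⊗ P_G` and of `C_c(G)` in `P_G`. -/
theorem elemPairs_dense (x : R) {ε : ℝ} (hε : 0 < ε) : ∃ w ∈ elemPairs td d, ‖x - w.2‖ < ε := by
  let S : Submodule ℂ R := ((elemPairs td d).map (LinearMap.snd ℂ (PSec Gp P) R)).topologicalClosure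
  have hS : ∀ p q, td.t p q ∈ S := by
    intro p q
    refine Metric.mem_closure_iff.2 fun δ hδ => ?_
    have hpos : 0 < ‖p‖ + 1 := by positivity
    obtain ⟨F, hF⟩ := d.emb_dense q (δ / (‖p‖ + 1)) (by positivity)
    refine ⟨td.t p (d.emb F), ⟨(elemSec F p, td.t p (d.emb F)),
      Submodule.subset_span ⟨(F, p), rfl⟩, rfl⟩, ?_⟩
    rw [dist_eq_norm, ← tensor_sub_right]
    refine (norm_tensor_le td _ _).trans_lt ?_
    calc ‖p‖ * ‖q - d.emb F‖ ≤ (‖p‖ + 1) * ‖q - d.emb F‖ := by gcongr; linarith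
      _ < (‖p‖ + 1) * (δ / (‖p‖ + 1)) := by gcongr
      _ = δ := by field_simp
  have hx : x ∈ S := by
    have hc : IsClosed (S : Set R) := Submodule.isClosed_topologicalClosure _
    rw [← SetLike.mem_coe, ← hc.closure_eq]
    refine Metric.mem_closure_iff.2 fun δ hδ => ?_
    obtain ⟨n, ps, qs, h⟩ := td.t_dense x δ hδ
    exact ⟨_, Submodule.sum_mem _ fun i _ => hS (ps i) (qs i), by rwa [dist_eq_norm]⟩
  obtain ⟨_, ⟨w, hw, rfl⟩, h⟩ := Metric.mem_closure_iff.1 hx ε hε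
  exact ⟨w, hw, by rwa [dist_eq_norm] at h⟩

end Approximation

/-! ### Groupoid actions -/

section Actions

variable {Y : Type} [TopologicalSpace Y] {Gp : LCGroupoid Y}
variable {P : Type} [NormedAddCommGroup P] [NormedSpace ℂ P] [HilbertCzeroModule Y P]

theorem fcast_mk {y z : Y} (h : y = z) (p : P) :
    fcast Y P h (fibMk Y P y p) = fibMk Y P z p := by subst h; rfl

theorem fibMk_congr {y z : Y} (h : y = z) {p q : P} (hpq : fibMk Y P y p = fibMk Y P y q) :
    fibMk Y P z p = fibMk Y P z q := by subst h; exact hpq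

variable (A : GAction Gp P)

theorem act_mul_mk {g h : Gp.G} (hc : Gp.s g = Gp.r h) {p p' p'' : P}
    (h1 : A.act h (fibMk Y P (Gp.s h) p) = fibMk Y P (Gp.r h) p')
    (h2 : A.act g (fibMk Y P (Gp.s g) p') = fibMk Y P (Gp.r g) p'') :
    A.act (Gp.mul g h) (fibMk Y P (Gp.s (Gp.mul g h)) p) =
      fibMk Y P (Gp.r (Gp.mul g h)) p'' := by
  have := A.act_mul g h hc (fibMk Y P _ p)
  rwa [fcast_mk, h1, fcast_mk, h2, fcast_mk] at this

theorem act_unit_mk {k : Gp.G} {y : Y} (hk : k = Gp.unit y) {p q : P}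
    (h : A.act k (fibMk Y P (Gp.s k) p) = fibMk Y P (Gp.r k) q) :
    fibMk Y P y p = fibMk Y P y q := by
  subst hk
  have := A.act_unit y (fibMk Y P y p)
  rw [fcast_mk, fcast_mk, h] at this
  exact fibMk_congr (Gp.r_unit y) this.symm

theorem act_inv_mk {g : Gp.G} {p p' : P}
    (h : A.act g (fibMk Y P (Gp.s g) p) = fibMk Y P (Gp.r g) p') :
    A.act (Gp.inv g) (fibMk Y P (Gp.s (Gp.inv g)) p') = fibMk Y P (Gp.r (Gp.inv g)) p := by
  obtain ⟨q, hq⟩ := fibMk_surj _ (A.act (Gp.inv g) (fibMk Y P (Gp.s (Gp.inv g)) p'))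
  rw [← hq]
  exact fibMk_congr (Gp.r_inv g).symm
    (act_unit_mk A (Gp.inv_mul g) (act_mul_mk A (Gp.s_inv g) h hq.symm)).symm

theorem act_injective (g : Gp.G) : Function.Injective (A.act g) := by
  intro v w h
  obtain ⟨p, rfl⟩ := fibMk_surj _ v
  obtain ⟨q, rfl⟩ := fibMk_surj _ w
  obtain ⟨a, ha⟩ := fibMk_surj _ (A.act g (fibMk Y P (Gp.s g) p))
  have h1 := act_inv_mk A ha.symm
  have h2 := act_inv_mk A (ha.trans h).symm
  exact fibMk_congr (Gp.r_inv g) (h1.symm.trans h2)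

/-- The action of `g` as a linear isomorphism `P_{s(g)} ≃ P_{r(g)}`. -/
def actEquiv (g : Gp.G) : Fib Y P (Gp.s g) ≃ₗ[ℂ] Fib Y P (Gp.r g) :=
  LinearEquiv.ofBijective
    { toFun := A.act g, map_add' := A.act_add g, map_smul' := A.act_csmul g }
    ⟨act_injective A g, A.act_surjective g⟩

theorem actEquiv_apply (g : Gp.G) (v : Fib Y P (Gp.s g)) : actEquiv A g v = A.act g v := rfl

theorem fibSemi_act (g : Gp.G) (v : Fib Y P (Gp.s g)) :
    fibSemi P (Gp.r g) (actEquiv A g v) = fibSemi P (Gp.s g) v := A.act_norm g v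

/-- The section `φ'` restricts on `G^{r(g)}` to the translate by `g` of `φ|_{G^{s(g)}}`:
`φ'(gk) = g · φ(k)`, expressed through representatives of the fiber elements. -/
def IsTranslate (g : Gp.G) (φ φ' : PSec Gp P) : Prop :=
  ∀ k, Gp.s g = Gp.r k → ∃ p p' : P, φ k = fibMk Y P (Gp.r k) p ∧
    A.act g (fibMk Y P (Gp.s g) p) = fibMk Y P (Gp.r g) p' ∧
    φ' (Gp.mul g k) = fibMk Y P (Gp.r (Gp.mul g k)) p'

variable {A}

theorem IsTranslate.add {g : Gp.G} {φ φ' ψ ψ' : PSec Gp P} (h : IsTranslate A g φ φ')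
    (h' : IsTranslate A g ψ ψ') : IsTranslate A g (φ + ψ) (φ' + ψ') := by
  intro k hk
  obtain ⟨p, p', h1, h2, h3⟩ := h k hk
  obtain ⟨q, q', h4, h5, h6⟩ := h' k hk
  refine ⟨p + q, p' + q', ?_, ?_, ?_⟩
  · rw [Pi.add_apply, h1, h4, fibMk_add]
  · rw [fibMk_add, A.act_add, h2, h5, fibMk_add]
  · rw [Pi.add_apply, h3, h6, fibMk_add]

theorem IsTranslate.smul {g : Gp.G} {φ φ' : PSec Gp P} (c : ℂ) (h : IsTranslate A g φ φ') :
    IsTranslate A g (c • φ) (c • φ') := by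
  intro k hk
  obtain ⟨p, p', h1, h2, h3⟩ := h k hk
  refine ⟨c • p, c • p', ?_, ?_, ?_⟩
  · rw [Pi.smul_apply, h1, fibMk_smul]
  · rw [fibMk_smul, A.act_csmul, h2, fibMk_smul]
  · rw [Pi.smul_apply, h3, fibMk_smul]

theorem IsTranslate.sub {g : Gp.G} {φ φ' ψ ψ' : PSec Gp P} (h : IsTranslate A g φ φ')
    (h' : IsTranslate A g ψ ψ') : IsTranslate A g (φ - ψ) (φ' - ψ') := by
  have := h.add (h'.smul (-1))
  rwa [neg_one_smul, neg_one_smul, ← sub_eq_add_neg, ← sub_eq_add_neg] at this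

theorem IsTranslate.zero (g : Gp.G) : IsTranslate A g 0 0 := fun k _ => by
  refine ⟨0, 0, (fibMk_zero _).symm, ?_, (fibMk_zero _).symm⟩
  rw [fibMk_zero, fibMk_zero]
  exact map_zero (actEquiv A g)

/-- Left invariance of the Haar system. -/
theorem IsTranslate.L2_eq (hs : HaarSystem Y Gp) {g : Gp.G} {φ φ' : PSec Gp P}
    (h : IsTranslate A g φ φ') (hφ' : CcPullbackSection P φ') :
    L2 hs (Gp.r g) φ' = L2 hs (Gp.s g) φ := by
  have hc : Continuous fun k => ((fibSemi P (Gp.r k) (φ' k) ^ 2 : ℝ) : ℂ) :=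
    Complex.continuous_ofReal.comp ((cc_norm_cont hφ').pow 2)
  have hsupp : HasCompactSupport fun k => ((fibSemi P (Gp.r k) (φ' k) ^ 2 : ℝ) : ℂ) :=
    (cc_norm_supp hφ').comp_left (g := fun t : ℝ => ((t ^ 2 : ℝ) : ℂ)) (by simp)
  have hinv := hs.left_invariant g _ hc hsupp
  have hae : ∀ᵐ k ∂(hs.lam (Gp.s g)), Gp.r k = Gp.s g := hs.concentrated (Gp.s g)
  rw [L2, L2]
  congr 1
  apply Complex.ofReal_injective
  rw [← integral_complex_ofReal, ← integral_complex_ofReal, ← hinv]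
  refine MeasureTheory.integral_congr_ae ?_
  filter_upwards [hae] with k hk
  obtain ⟨p, p', h1, h2, h3⟩ := h k hk.symm
  have e := A.act_norm g (fibMk Y P (Gp.s g) p)
  rw [h2, fibNormQ_mk, fibNormQ_mk] at e
  rw [h1, h3, fibSemi_mk, fibSemi_mk, Gp.r_mul g k hk.symm, hk, e]

end Actions

/-! ### Left translation of sections -/

section Translation

variable {Y : Type} [TopologicalSpace Y] [T2Space Y] {Gp : LCGroupoid Y} {hs : HaarSystem Y Gp}

/-- The translate `m ↦ h(g⁻¹m)` of `h ∈ C_c(G)`, defined on the closed subset `G^{r(g)}`, extends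
to an element of `C_c(G)`. -/
theorem exists_translate (g : Gp.G) (h : CcFun Y Gp) :
    ∃ h' : CcFun Y Gp, ∀ m, Gp.r m = Gp.r g → h'.1 m = h.1 (Gp.mul (Gp.inv g) m) := by
  have hcl : IsClosed {m : Gp.G | Gp.r m = Gp.r g} :=
    isClosed_eq Gp.r_cont continuous_const
  let f : C({m : Gp.G | Gp.r m = Gp.r g}, ℂ) :=
    ⟨fun m => h.1 (Gp.mul (Gp.inv g) m.1), h.2.1.comp
      (Gp.mul_cont.comp (Continuous.subtype_mk (f := fun m : {m : Gp.G | Gp.r m = Gp.r g} =>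
        (Gp.inv g, m.1)) (by fun_prop) fun m => (Gp.s_inv g).trans m.2.symm))⟩
  obtain ⟨F, hF⟩ := f.exists_extension hcl.isClosedEmbedding_subtypeVal
  have hmul : ContinuousOn (Gp.mul g) {k | Gp.s g = Gp.r k} := by
    rw [continuousOn_iff_continuous_domRestrict]
    exact Gp.mul_cont.comp (Continuous.subtype_mk (f := fun m : {k : Gp.G | Gp.s g = Gp.r k} =>
        (g, m.1)) (by fun_prop) fun m => m.2)
  have hK : IsCompact (Gp.mul g '' (tsupport h.1 ∩ {k | Gp.s g = Gp.r k})) :=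
    (h.2.2.isCompact.inter_right (isClosed_eq continuous_const Gp.r_cont)).image_of_continuousOn
      (hmul.mono Set.inter_subset_right)
  obtain ⟨χ, hχ1, -, hχs, -⟩ := exists_continuous_one_zero_of_isCompact hK isClosed_empty
    (Set.disjoint_empty _)
  refine ⟨⟨fun m => (χ m : ℂ) * F m, by fun_prop,
    (hχs.comp_left (g := Complex.ofReal) Complex.ofReal_zero).mul_right⟩, fun m hm => ?_⟩
  have hFm : F m = h.1 (Gp.mul (Gp.inv g) m) := DFunLike.congr_fun hF ⟨m, hm⟩
  change (χ m : ℂ) * F m = _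
  rw [hFm]
  have hsi : Gp.s (Gp.inv g) = Gp.r m := (Gp.s_inv g).trans hm.symm
  by_cases hk : Gp.mul (Gp.inv g) m ∈ tsupport h.1
  · have hmem : m ∈ Gp.mul g '' (tsupport h.1 ∩ {k | Gp.s g = Gp.r k}) := by
      refine ⟨_, ⟨hk, ?_⟩, ?_⟩
      · change Gp.s g = _
        rw [Gp.r_mul _ _ hsi, Gp.r_inv]
      · rw [← Gp.mul_assoc _ _ _ (Gp.r_inv g).symm hsi, Gp.mul_inv, ← hm, Gp.unit_mul]
    have := hχ1 hmem
    rw [this]; simp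
  · rw [image_eq_zero_of_notMem_tsupport hk, mul_zero]

variable {P : Type} [NormedAddCommGroup P] [NormedSpace ℂ P] [HilbertCzeroModule Y P]
variable {PG : Type} [NormedAddCommGroup PG] [NormedSpace ℂ PG] [HilbertCzeroModule Y PG]
variable {R : Type} [NormedAddCommGroup R] [NormedSpace ℂ R] [HilbertCzeroModule Y R]
variable {td : TensorData Y P PG R} {d : PGData Gp hs PG}
variable {A : GAction Gp P} {APG : GAction Gp PG} {AR : GAction Gp R}

/-- The naive translate of `h p̂` is `k ↦ h(g⁻¹k) g p̂(s(g))`, defined only on `G^{r(g)}`; the function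
`h(g⁻¹ ·)` is extended to a function on `G`, and a module element represents `g p̂(s(g))`. -/
theorem exists_translate_elemPairs (hAPG : IsNaturalPGAction d APG)
    (hR : IsDiagonalAction td A APG AR) (g : Gp.G) {w : PSec Gp P × R} (hw : w ∈ elemPairs td d) :
    ∃ w' ∈ elemPairs td d, IsTranslate A g w.1 w'.1 ∧
      AR.act g (fibMk Y R (Gp.s g) w.2) = fibMk Y R (Gp.r g) w'.2 := by
  induction hw using Submodule.span_induction with
  | mem x hx =>
    obtain ⟨⟨h, p⟩, rfl⟩ := hx
    obtain ⟨p', hp'⟩ := fibMk_surj _ (A.act g (fibMk Y P (Gp.s g) p))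
    obtain ⟨h', hh'⟩ := exists_translate g h
    refine ⟨_, Submodule.subset_span ⟨(h', p'), rfl⟩, fun k hk => ?_,
      hR g p p' _ _ hp'.symm (hAPG g h h' hh')⟩
    refine ⟨h.1 k • p, h.1 k • p', ?_, ?_, ?_⟩
    · rw [fibMk_smul]; rfl
    · rw [fibMk_smul, A.act_csmul, ← hp', fibMk_smul]
    · have e := hh' (Gp.mul g k) (Gp.r_mul g k hk)
      rw [← Gp.mul_assoc _ _ _ (Gp.s_inv g) hk, Gp.inv_mul, hk, Gp.unit_mul] at e
      rw [← e, fibMk_smul]; rfl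
  | zero =>
    refine ⟨0, zero_mem _, IsTranslate.zero g, ?_⟩
    rw [Prod.snd_zero, fibMk_zero, fibMk_zero]
    exact map_zero (actEquiv AR g)
  | add x z _ _ hx hz =>
    obtain ⟨x', hx', h1, h2⟩ := hx
    obtain ⟨z', hz', h3, h4⟩ := hz
    refine ⟨x' + z', add_mem hx' hz', h1.add h3, ?_⟩
    rw [Prod.snd_add, Prod.snd_add, fibMk_add, fibMk_add, AR.act_add, h2, h4]
  | smul c x _ hx =>
    obtain ⟨x', hx', h1, h2⟩ := hx
    refine ⟨c • x', Submodule.smul_mem _ _ hx', h1.smul c, ?_⟩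
    rw [Prod.smul_snd, Prod.smul_snd, fibMk_smul, fibMk_smul, AR.act_csmul, h2]

/-- The diagonal action on `P ⊗ P_G` is the translation action on the represented sections. -/
theorem act_of_isTranslate [CompleteSpace R] (hAPG : IsNaturalPGAction d APG)
    (hR : IsDiagonalAction td A APG AR) {g : Gp.G} {w w' : PSec Gp P × R} (hw : w ∈ Rep td d)
    (hw' : w' ∈ Rep td d) (h : IsTranslate A g w.1 w'.1) :
    AR.act g (fibMk Y R (Gp.s g) w.2) = fibMk Y R (Gp.r g) w'.2 := by
  refine fib_ext_of_fibSemi fun ε hε => ?_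
  obtain ⟨e, he, h1, h2⟩ := ((mem_rep td d).1 hw).2 (ε / 2) (by positivity)
  obtain ⟨e', he', h3, h4⟩ := exists_translate_elemPairs hAPG hR g he
  have hwe := sub_mem hw' (elemPairs_le_rep td d he')
  have n1 := rep_norm td d hwe (Gp.r g)
  rw [Prod.fst_sub, (h.sub h3).L2_eq hs ((mem_rep td d).1 hwe).1, Prod.snd_sub] at n1
  have n2 := fibSemi_act AR g (fibMk Y R (Gp.s g) (w.2 - e.2))
  rw [fibMk_sub, map_sub, actEquiv_apply, actEquiv_apply, h4, ← fibMk_sub, fibSemi_mk] at n2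
  have n3 := map_add_le_add (fibSemi R (Gp.r g))
    (AR.act g (fibMk Y R (Gp.s g) w.2) - fibMk Y R (Gp.r g) e'.2)
    (fibMk Y R (Gp.r g) e'.2 - fibMk Y R (Gp.r g) w'.2)
  rw [sub_add_sub_cancel, n2, ← fibMk_sub, fibSemi_mk, map_sub_rev (repSemi R (Gp.r g)) e'.2] at n3
  linarith [h1 (Gp.s g), h2 (Gp.s g)]

end Translation

/-! ### Continuity of actions -/

section ContinuityOfActions

variable {Y : Type} [TopologicalSpace Y] {Gp : LCGroupoid Y}
variable {P : Type} [NormedAddCommGroup P] [NormedSpace ℂ P] [HilbertCzeroModule Y P]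
variable (A : GAction Gp P)

theorem CtsSec.act {v : (g : Gp.G) → Fib Y P (Gp.s g)} (hv : CtsSec Gp.s v) :
    CtsSec Gp.r fun g => actEquiv A g (v g) := by
  rw [ctsSec_iff] at hv ⊢
  let := topEP Y P
  have h : Continuous fun g : Gp.G =>
      (⟨(g, ⟨Gp.s g, v g⟩), rfl⟩ : {q : Gp.G × TotalP Y P // Gp.s q.1 = q.2.1}) :=
    (continuous_id.prodMk hv).subtype_mk _
  exact A.act_cont.comp h

/-- `g ↦ g⁻¹·φ(g)` is continuous along `s`: near `g₀` it stays close to any `p̂ ∘ s` with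
`p̂(s(g₀)) = g₀⁻¹·φ(g₀)`, because `g ↦ g·p̂(s(g))` is continuous and `g` acts isometrically. -/
theorem CtsSec.act_symm {φ : PSec Gp P} (hφ : CtsSec Gp.r φ) :
    CtsSec Gp.s fun g => (actEquiv A g).symm (φ g) := by
  refine ⟨Gp.s_cont, fun g₀ ε hε => ?_⟩
  obtain ⟨p, hp⟩ := fibMk_surj _ ((actEquiv A g₀).symm (φ g₀))
  refine ⟨p, ?_⟩
  have h1 := CtsSec.act A (CtsSec.hat Gp.s_cont p)
  have h2 := (hφ.add (h1.smul (continuous_const (y := (-1 : ℂ))))).continuous_norm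
  have e : ∀ g, fibSemi P (Gp.s g) ((actEquiv A g).symm (φ g) - fibMk Y P (Gp.s g) p) =
      fibSemi P (Gp.r g) (φ g + (-1 : ℂ) • actEquiv A g (fibMk Y P (Gp.s g) p)) := by
    intro g
    rw [← fibSemi_act A, map_sub, LinearEquiv.apply_symm_apply, neg_one_smul, ← sub_eq_add_neg]
  simp_rw [e]
  refine (h2.tendsto g₀).eventually_lt_const ?_
  rw [Pi.add_apply, hp, LinearEquiv.apply_symm_apply, neg_one_smul, add_neg_cancel, map_zero]
  exact hε

end ContinuityOfActions

/-! ### The twisted map -/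

section Unitaries

variable {Y : Type} [TopologicalSpace Y]
variable {P : Type} [NormedAddCommGroup P] [NormedSpace ℂ P] [HilbertCzeroModule Y P]
variable {Q : Type} [NormedAddCommGroup Q] [NormedSpace ℂ Q] [HilbertCzeroModule Y Q]

theorem repSemi_sq_add (y : Y) (p q : P) :
    repSemi P y (p + q) ^ 2 = repSemi P y p ^ 2 + repSemi P y q ^ 2 + 2 * (modIP Y p q y).re := by
  have e : modIP Y (p + q) (p + q) y =
      modIP Y p p y + conj (modIP Y p q y) + (modIP Y p q y + modIP Y q q y) := by
    rw [ip_add_right, ip_conj (p + q) p, ip_conj (p + q) q, ip_add_right, ip_add_right, map_add,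
      map_add, ← ip_conj, ← ip_conj, ← ip_conj q q, ip_conj p q]
  rw [repSemi_sq, repSemi_sq, repSemi_sq, e]
  simp only [Complex.add_re, Complex.conj_re]
  ring

/-- Polarization: a linear map preserving all fiber norms preserves the inner product. -/
theorem modIP_of_repSemi (U : P →ₗ[ℂ] Q) (hU : ∀ (y : Y) p, repSemi Q y (U p) = repSemi P y p)
    (p q : P) : modIP Y (U p) (U q) = modIP Y p q := by
  have hre : ∀ (y : Y) p q, (modIP Y (U p) (U q) y).re = (modIP Y p q y).re := by
    intro y p q
    have h1 := repSemi_sq_add y (U p) (U q)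
    have h2 := repSemi_sq_add y p q
    rw [← map_add, hU, hU, hU] at h1
    linarith
  ext y
  refine Complex.ext (hre y p q) ?_
  have := hre y p (Complex.I • q)
  rw [map_smul, ip_smul_right, ip_smul_right] at this
  simpa using this

/-- A surjective linear map preserving the inner product is `C₀(Y)`-linear, since
`⟨Uz, U(pf)⟩ = ⟨z, p⟩f = ⟨Uz, (Up)f⟩` for all `z`. -/
theorem msmul_of_modIP (U : P →ₗ[ℂ] Q) (hs : Function.Surjective U)
    (hU : ∀ p q, modIP Y (U p) (U q) = modIP Y p q) (p : P) (f : C₀(Y, ℂ)) :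
    U (modSMul Y p f) = modSMul Y (U p) f := by
  obtain ⟨z, hz⟩ := hs (U (modSMul Y p f) - modSMul Y (U p) f)
  refine sub_eq_zero.1 (norm_le_zero_iff.1 (norm_le_of_repSemi_le (Y := Y) le_rfl fun y => ?_))
  have h : modIP Y (U z) (U z) y = 0 := by
    have h1 := ip_add_right (U z) (modSMul Y (U p) f) (U z) y
    rw [show modSMul Y (U p) f + U z = U (modSMul Y p f) by rw [hz, add_sub_cancel], hU,
      ip_msmul_right, ip_msmul_right, hU] at h1
    simpa using h1
  rw [← hz]
  refine le_of_eq (pow_eq_zero_iff two_ne_zero |>.1 ?_)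
  rw [repSemi_sq, h, Complex.zero_re]

variable (U : P ≃ₗ[ℂ] Q) (hmod : ∀ p (f : C₀(Y, ℂ)), U (modSMul Y p f) = modSMul Y (U p) f)

include hmod in
theorem map_fiberIdeal (y : Y) :
    (fiberIdeal Y P y).map (U : P →ₗ[ℂ] Q) = fiberIdeal Y Q y := by
  rw [fiberIdeal, Submodule.map_span, fiberIdeal]
  congr 1
  ext x
  constructor
  · rintro ⟨_, ⟨f, p, hf, rfl⟩, rfl⟩
    exact ⟨f, U p, hf, hmod p f⟩
  · rintro ⟨f, q, hf, rfl⟩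
    exact ⟨_, ⟨f, U.symm q, hf, rfl⟩, (hmod _ f).trans (by rw [U.apply_symm_apply])⟩

/-- The unitary `U_y : P_y → Q_y` induced on fibers by `U : P → Q`. -/
def fibU (y : Y) : Fib Y P y ≃ₗ[ℂ] Fib Y Q y :=
  Submodule.Quotient.equiv _ _ U (map_fiberIdeal U hmod y)

theorem fibU_mk (y : Y) (p : P) : fibU U hmod y (fibMk Y P y p) = fibMk Y Q y (U p) := rfl

theorem fibU_symm_mk (y : Y) (q : Q) :
    (fibU U hmod y).symm (fibMk Y Q y q) = fibMk Y P y (U.symm q) := rfl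

variable (hin : ∀ (y : Y) p, repSemi Q y (U p) = repSemi P y p)

include hin

theorem fibSemi_fibU (y : Y) (v : Fib Y P y) :
    fibSemi Q y (fibU U hmod y v) = fibSemi P y v := by
  obtain ⟨p, rfl⟩ := fibMk_surj y v
  rw [fibU_mk, fibSemi_mk, fibSemi_mk, hin]

theorem CtsSec.fibU {X : Type} [TopologicalSpace X] {b : X → Y} {v : (x : X) → Fib Y P (b x)}
    (hv : CtsSec b v) : CtsSec b fun x => fibU U hmod (b x) (v x) := by
  refine ⟨hv.1, fun x₀ ε hε => ?_⟩
  obtain ⟨q, hq⟩ := hv.2 x₀ ε hε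
  refine ⟨U q, hq.mono fun x hx => ?_⟩
  rwa [← fibU_mk U hmod, ← map_sub, fibSemi_fibU U hmod hin]

theorem CtsSec.fibU_symm {X : Type} [TopologicalSpace X] {b : X → Y}
    {v : (x : X) → Fib Y Q (b x)} (hv : CtsSec b v) :
    CtsSec b fun x => (Stabilization.fibU U hmod (b x)).symm (v x) := by
  refine ⟨hv.1, fun x₀ ε hε => ?_⟩
  obtain ⟨q, hq⟩ := hv.2 x₀ ε hε
  refine ⟨U.symm q, hq.mono fun x hx => ?_⟩
  rwa [← fibU_symm_mk U hmod, ← map_sub, ← fibSemi_fibU U hmod hin, LinearEquiv.apply_symm_apply]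

variable {Gp : LCGroupoid Y} (AP : GAction Gp P) (AQ : GAction Gp Q)

omit hin in
/-- The twisted map `(Tφ)(g) = g·U_{s(g)}(g⁻¹·φ(g))` on sections of `r*E_P`. -/
def twist : PSec Gp P ≃ₗ[ℂ] PSec Gp Q :=
  LinearEquiv.piCongrRight fun g =>
    (actEquiv AP g).symm ≪≫ₗ fibU U hmod (Gp.s g) ≪≫ₗ actEquiv AQ g

omit hin in
theorem twist_apply (φ : PSec Gp P) (g : Gp.G) : twist U hmod AP AQ φ g =
    actEquiv AQ g (fibU U hmod (Gp.s g) ((actEquiv AP g).symm (φ g))) := rfl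

omit hin in
theorem twist_symm_apply (ψ : PSec Gp Q) (g : Gp.G) : (twist U hmod AP AQ).symm ψ g =
    actEquiv AP g ((fibU U hmod (Gp.s g)).symm ((actEquiv AQ g).symm (ψ g))) := rfl

omit hin in
theorem twist_apply_of_act (φ : PSec Gp P) (g : Gp.G) {p : P}
    (hp : AP.act g (fibMk Y P (Gp.s g) p) = φ g) :
    twist U hmod AP AQ φ g = AQ.act g (fibMk Y Q (Gp.s g) (U p)) := by
  rw [twist_apply, ← hp, ← actEquiv_apply, LinearEquiv.symm_apply_apply, fibU_mk, actEquiv_apply]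

theorem fibSemi_twist (φ : PSec Gp P) (g : Gp.G) :
    fibSemi Q (Gp.r g) (twist U hmod AP AQ φ g) = fibSemi P (Gp.r g) (φ g) := by
  rw [twist_apply, fibSemi_act, fibSemi_fibU U hmod hin, ← fibSemi_act AP,
    LinearEquiv.apply_symm_apply]

theorem L2_twist (hs : HaarSystem Y Gp) (y : Y) (φ : PSec Gp P) :
    L2 hs y (twist U hmod AP AQ φ) = L2 hs y φ := by
  simp_rw [L2, fibSemi_twist U hmod hin]

theorem cc_twist {φ : PSec Gp P} (hφ : CcPullbackSection P φ) :
    CcPullbackSection Q (twist U hmod AP AQ φ) := by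
  rw [ccPullbackSection_iff] at hφ ⊢
  obtain ⟨h, K, hK, hφK⟩ := hφ
  refine ⟨CtsSec.act AQ (CtsSec.fibU U hmod hin (CtsSec.act_symm AP h)), K, hK, fun g hg => ?_⟩
  rw [twist_apply, hφK g hg, map_zero, map_zero, map_zero]

theorem cc_twist_symm {ψ : PSec Gp Q} (hψ : CcPullbackSection Q ψ) :
    CcPullbackSection P ((twist U hmod AP AQ).symm ψ) := by
  rw [ccPullbackSection_iff] at hψ ⊢
  obtain ⟨h, K, hK, hψK⟩ := hψ
  refine ⟨CtsSec.act AP (CtsSec.fibU_symm U hmod hin (CtsSec.act_symm AQ h)), K, hK,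
    fun g hg => ?_⟩
  rw [twist_symm_apply, hψK g hg, map_zero, map_zero, map_zero]

omit hin in
/-- `T` commutes with translations although `U` is not equivariant:
`(Tφ')(gk) = gk·U(k⁻¹g⁻¹·φ'(gk)) = g·(k·U(k⁻¹·φ(k)))` when `φ'(gk) = g·φ(k)`. -/
theorem isTranslate_twist {g : Gp.G} {φ φ' : PSec Gp P} (h : IsTranslate AP g φ φ') :
    IsTranslate AQ g (twist U hmod AP AQ φ) (twist U hmod AP AQ φ') := by
  intro k hk
  obtain ⟨p, p', h1, h2, h3⟩ := h k hk
  obtain ⟨v, hv⟩ := AP.act_surjective k (φ k)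
  obtain ⟨a, rfl⟩ := fibMk_surj _ v
  obtain ⟨b, hb⟩ := fibMk_surj _ (AQ.act k (fibMk Y Q (Gp.s k) (U a)))
  obtain ⟨b', hb'⟩ := fibMk_surj _ (AQ.act g (fibMk Y Q (Gp.s g) b))
  refine ⟨b, b', ?_, hb'.symm, ?_⟩
  · rw [twist_apply_of_act U hmod AP AQ φ k hv, hb]
  · have e := act_mul_mk AP hk (hv.trans h1) h2
    rw [twist_apply_of_act U hmod AP AQ φ' _ (e.trans h3.symm)]
    exact act_mul_mk AQ hk hb.symm hb'.symm

end Unitaries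

/-! ### Extension to the tensor products -/

section Extension

variable {Y : Type} [TopologicalSpace Y] [T2Space Y] {Gp : LCGroupoid Y} {hs : HaarSystem Y Gp}
variable {P : Type} [NormedAddCommGroup P] [NormedSpace ℂ P] [HilbertCzeroModule Y P]
variable {Q : Type} [NormedAddCommGroup Q] [NormedSpace ℂ Q] [HilbertCzeroModule Y Q]
variable {PG : Type} [NormedAddCommGroup PG] [NormedSpace ℂ PG] [HilbertCzeroModule Y PG]
variable {RP : Type} [NormedAddCommGroup RP] [NormedSpace ℂ RP] [CompleteSpace RP]
  [HilbertCzeroModule Y RP]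
variable {RQ : Type} [NormedAddCommGroup RQ] [NormedSpace ℂ RQ] [CompleteSpace RQ]
  [HilbertCzeroModule Y RQ]
variable (U : P ≃ₗ[ℂ] Q) (hmod : ∀ p (f : C₀(Y, ℂ)), U (modSMul Y p f) = modSMul Y (U p) f)
  (hin : ∀ (y : Y) p, repSemi Q y (U p) = repSemi P y p)
variable (AP : GAction Gp P) (AQ : GAction Gp Q)
variable (tdP : TensorData Y P PG RP) (tdQ : TensorData Y Q PG RQ) (d : PGData Gp hs PG)

omit [T2Space Y] [CompleteSpace RP] in
theorem continuous_repSemi (y : Y) : Continuous (repSemi RP y) :=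
  Seminorm.continuous_of_le (q := normSeminorm ℂ RP) continuous_norm
    fun p => repSemi_le_norm y p

/-- The triples `(φ, x, z)` in which `x` represents `φ̂` and `z` represents the section
associated with the twisted map `Tφ`. -/
def twistGraph : Submodule ℂ (PSec Gp P × RP × RQ) :=
  (Rep tdP d).comap
      ((LinearMap.fst ℂ _ _).prod ((LinearMap.fst ℂ RP RQ).comp (LinearMap.snd ℂ _ _))) ⊓
    (Rep tdQ d).comap
      (((twist U hmod AP AQ).toLinearMap.comp (LinearMap.fst ℂ _ _)).prod
        ((LinearMap.snd ℂ RP RQ).comp (LinearMap.snd ℂ _ _)))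

omit [T2Space Y] [CompleteSpace RP] [CompleteSpace RQ] in
theorem mem_twistGraph {φ : PSec Gp P} {x : RP} {z : RQ} :
    (φ, x, z) ∈ twistGraph U hmod AP AQ tdP tdQ d ↔
      (φ, x) ∈ Rep tdP d ∧ (twist U hmod AP AQ φ, z) ∈ Rep tdQ d := Iff.rfl

include hin

/-- The isometry `φ ↦ Tφ` on `C_c(G, r*E_P)` extends to an isometry `V : P ⊗ P_G → Q ⊗ P_G`,
which is isometric on every fiber. -/
theorem exists_extension : ∃ V : RP ≃ₗᵢ[ℂ] RQ,
    (∀ (φ : PSec Gp P) x, (φ, x) ∈ Rep tdP d → (twist U hmod AP AQ φ, V x) ∈ Rep tdQ d) ∧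
    ∀ (y : Y) x, repSemi RQ y (V x) = repSemi RP y x := by
  set A := twistGraph U hmod AP AQ tdP tdQ d with hA
  let a : A →ₗ[ℂ] RP := (LinearMap.fst ℂ RP RQ).comp ((LinearMap.snd ℂ _ _).comp A.subtype)
  let b : A →ₗ[ℂ] RQ := (LinearMap.snd ℂ RP RQ).comp ((LinearMap.snd ℂ _ _).comp A.subtype)
  have hsemi : ∀ (t : A) (y : Y), repSemi RQ y (b t) = repSemi RP y (a t) := by
    rintro ⟨⟨φ, x, z⟩, ht⟩ y
    obtain ⟨h1, h2⟩ := (mem_twistGraph U hmod AP AQ tdP tdQ d).1 ht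
    exact (rep_norm tdQ d h2 y).symm.trans
      ((L2_twist U hmod hin AP AQ hs y φ).trans (rep_norm tdP d h1 y))
  have hnorm : ∀ t : A, ‖b t‖ = ‖a t‖ := fun t => le_antisymm
    (norm_le_of_repSemi_le (Y := Y) (norm_nonneg _) fun y =>
      (hsemi t y).trans_le (repSemi_le_norm y _))
    (norm_le_of_repSemi_le (Y := Y) (norm_nonneg _) fun y =>
      (hsemi t y).symm.trans_le (repSemi_le_norm y _))
  have hz : ∀ {φ : PSec Gp P} {x : RP}, (φ, x) ∈ Rep tdP d → ∃ z : RQ, (φ, x, z) ∈ A := by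
    intro φ x h
    obtain ⟨z, hz⟩ := exists_rep tdQ d (cc_twist U hmod hin AP AQ ((mem_rep tdP d).1 h).1)
    exact ⟨z, h, hz⟩
  have ha : DenseRange a := by
    refine Metric.denseRange_iff.2 fun x ε hε => ?_
    obtain ⟨w, hw, hx⟩ := elemPairs_dense tdP d x hε
    obtain ⟨z, hz⟩ := hz (elemPairs_le_rep tdP d hw)
    exact ⟨⟨_, hz⟩, by rwa [dist_eq_norm]⟩
  have hb : DenseRange b := by
    refine Metric.denseRange_iff.2 fun z ε hε => ?_
    obtain ⟨w, hw, hx⟩ := elemPairs_dense tdQ d z hε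
    have hw' := elemPairs_le_rep tdQ d hw
    obtain ⟨x, hx'⟩ := exists_rep tdP d
      (cc_twist_symm U hmod hin AP AQ ((mem_rep tdQ d).1 hw').1)
    refine ⟨⟨((twist U hmod AP AQ).symm w.1, x, w.2), hx', ?_⟩, by rwa [dist_eq_norm]⟩
    simpa using hw'
  let V := (LinearEquiv.refl ℂ A).extendOfIsometry a b ha hb hnorm
  have hV : ∀ t : A, V (a t) = b t := fun t =>
    LinearEquiv.extendOfIsometry_eq (LinearEquiv.refl ℂ A) a b ha hb hnorm t
  refine ⟨V, fun φ x h => ?_, fun y x => ?_⟩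
  · obtain ⟨z, h'⟩ := hz h
    have e : V x = z := hV ⟨_, h'⟩
    rw [e]
    exact ((mem_twistGraph U hmod AP AQ tdP tdQ d).1 h').2
  · refine ha.induction_on (p := fun x => repSemi RQ y (V x) = repSemi RP y x) x
      (isClosed_eq ((continuous_repSemi y).comp V.continuous) (continuous_repSemi y)) fun t => ?_
    rw [hV, hsemi]

omit hin

variable {tdP tdQ d AP AQ} {APG : GAction Gp PG} {ARP : GAction Gp RP} {ARQ : GAction Gp RQ}

omit [CompleteSpace RP] in
/-- On the elementary sections `V` intertwines the actions because `T` commutes with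
translations; the general case follows by approximation, all maps involved being isometric on
fibers. -/
theorem extension_equivariant (hAPG : IsNaturalPGAction d APG)
    (hRP : IsDiagonalAction tdP AP APG ARP) (hRQ : IsDiagonalAction tdQ AQ APG ARQ)
    (V : RP →ₗ[ℂ] RQ)
    (hV : ∀ (φ : PSec Gp P) x, (φ, x) ∈ Rep tdP d → (twist U hmod AP AQ φ, V x) ∈ Rep tdQ d)
    (hVn : ∀ (y : Y) x, repSemi RQ y (V x) = repSemi RP y x)
    (g : Gp.G) (x x' : RP)
    (h : ARP.act g (fibMk Y RP (Gp.s g) x) = fibMk Y RP (Gp.r g) x') :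
    ARQ.act g (fibMk Y RQ (Gp.s g) (V x)) = fibMk Y RQ (Gp.r g) (V x') := by
  refine fib_ext_of_fibSemi fun ε hε => ?_
  obtain ⟨w, hw, hxw⟩ := elemPairs_dense tdP d x (half_pos hε)
  obtain ⟨w', hw', htr, hact⟩ := exists_translate_elemPairs hAPG hRP g hw
  have hactQ := act_of_isTranslate hAPG hRQ (hV _ _ (elemPairs_le_rep tdP d hw))
    (hV _ _ (elemPairs_le_rep tdP d hw')) (isTranslate_twist U hmod AP AQ htr)
  dsimp only at hactQ
  have hx : repSemi RP (Gp.s g) (x - w.2) ≤ ε / 2 := (repSemi_le_norm _ _).trans hxw.le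
  have e1 : fibSemi RQ (Gp.r g) (ARQ.act g (fibMk Y RQ (Gp.s g) (V x)) -
      fibMk Y RQ (Gp.r g) (V w'.2)) ≤ ε / 2 := by
    rw [← hactQ, ← actEquiv_apply, ← actEquiv_apply, ← map_sub, fibSemi_act, ← fibMk_sub,
      fibSemi_mk, ← map_sub, hVn]
    exact hx
  have e2 : fibSemi RQ (Gp.r g) (fibMk Y RQ (Gp.r g) (V w'.2) -
      fibMk Y RQ (Gp.r g) (V x')) ≤ ε / 2 := by
    rw [map_sub_rev, ← fibMk_sub, fibSemi_mk, ← map_sub, hVn, ← fibSemi_mk, fibMk_sub, ← h,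
      ← hact, ← actEquiv_apply, ← actEquiv_apply, ← map_sub, fibSemi_act, ← fibMk_sub,
      fibSemi_mk]
    exact hx
  calc _ = fibSemi RQ (Gp.r g) ((ARQ.act g (fibMk Y RQ (Gp.s g) (V x)) -
      fibMk Y RQ (Gp.r g) (V w'.2)) + (fibMk Y RQ (Gp.r g) (V w'.2) -
      fibMk Y RQ (Gp.r g) (V x'))) := by rw [sub_add_sub_cancel]
    _ ≤ _ := map_add_le_add _ _ _
    _ ≤ ε := by linarith

end Extension

/-- **Proposition 2.9.**  Let `P, Q` be `G`-Hilbert modules which are isomorphic as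
plain Hilbert `C₀(Y)`-modules via a unitary `U : P → Q` (not assumed equivariant).
Then `P ⊗_{C₀(Y)} P_G ≅ Q ⊗_{C₀(Y)} P_G` as `G`-Hilbert modules: there is a
`G`-equivariant unitary `V` between them, determined on `C_c(G, r*E_P)` by
`(Vφ)(g) = g · U_{s(g)}(g⁻¹ · φ(g))`. -/
theorem tensor_PG_equivariant_of_unitary
    (Y : Type) [TopologicalSpace Y] [T2Space Y] [LocallyCompactSpace Y]
    [SecondCountableTopology Y]
    (Gp : LCGroupoid Y) (hs : HaarSystem Y Gp)
    (P : Type) [NormedAddCommGroup P] [NormedSpace ℂ P] [CompleteSpace P]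
    [SecondCountableTopology P] [HilbertCzeroModule Y P] (AP : GAction Gp P)
    (Q : Type) [NormedAddCommGroup Q] [NormedSpace ℂ Q] [CompleteSpace Q]
    [SecondCountableTopology Q] [HilbertCzeroModule Y Q] (AQ : GAction Gp Q)
    -- a unitary Hilbert C₀(Y)-module isomorphism U : P → Q, not assumed equivariant
    (U : P → Q)
    (hUbij : Function.Bijective U)
    (hUadd : ∀ p p' : P, U (p + p') = U p + U p')
    (hUsmul : ∀ (c : ℂ) (p : P), U (c • p) = c • U p)
    (hUmod : ∀ (p : P) (f : C₀(Y, ℂ)), U (modSMul Y p f) = modSMul Y (U p) f)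
    (hUinner : ∀ p p' : P, modIP Y (U p) (U p') = modIP Y p p')
    -- P_G with its natural action
    (PG : Type) [NormedAddCommGroup PG] [NormedSpace ℂ PG] [CompleteSpace PG]
    [SecondCountableTopology PG] [HilbertCzeroModule Y PG]
    (d : PGData Gp hs PG) (APG : GAction Gp PG) (hAPG : IsNaturalPGAction d APG)
    -- RP = P ⊗ P_G and RQ = Q ⊗ P_G with the diagonal actions
    (RP : Type) [NormedAddCommGroup RP] [NormedSpace ℂ RP] [CompleteSpace RP]
    [SecondCountableTopology RP] [HilbertCzeroModule Y RP]
    (tdP : TensorData Y P PG RP) (ARP : GAction Gp RP)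
    (hRP : IsDiagonalAction tdP AP APG ARP)
    (RQ : Type) [NormedAddCommGroup RQ] [NormedSpace ℂ RQ] [CompleteSpace RQ]
    [SecondCountableTopology RQ] [HilbertCzeroModule Y RQ]
    (tdQ : TensorData Y Q PG RQ) (ARQ : GAction Gp RQ)
    (hRQ : IsDiagonalAction tdQ AQ APG ARQ) :
    ∃ V : RP → RQ,
      IsGEquivariantUnitary V ARP ARQ ∧
      -- V is determined on C_c(G, r*E_P) by (Vφ)(g) = g·U_{s(g)}(g⁻¹·φ(g)):
      -- whenever x ∈ RP corresponds to φ̂ and ψ(g) = g·U_{s(g)}(g⁻¹·φ(g)),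
      -- V x corresponds to ψ̂.
      (∀ (φ : (g : Gp.G) → Fib Y P (Gp.r g)) (ψ : (g : Gp.G) → Fib Y Q (Gp.r g)) (x : RP),
        CcPullbackSection P φ →
        RepresentsHat hs P PG RP tdP d φ (fun y => fibMk Y RP y x) →
        (∀ (g : Gp.G) (p : P),
          fibMk Y P (Gp.s g) p =
            fcast Y P (Gp.r_inv g)
              (AP.act (Gp.inv g) (fcast Y P (Gp.s_inv g).symm (φ g))) →
          ψ g = AQ.act g (fibMk Y Q (Gp.s g) (U p))) →
        RepresentsHat hs Q PG RQ tdQ d ψ (fun y => fibMk Y RQ y (V x))) := by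
  let U' : P ≃ₗ[ℂ] Q := LinearEquiv.ofBijective
    { toFun := U, map_add' := hUadd, map_smul' := hUsmul } hUbij
  have hmod : ∀ p (f : C₀(Y, ℂ)), U' (modSMul Y p f) = modSMul Y (U' p) f := hUmod
  have hin : ∀ (y : Y) p, repSemi Q y (U' p) = repSemi P y p := fun y p => by
    rw [repSemi_def, repSemi_def]
    exact congrArg (fun f : C₀(Y, ℂ) => √(f y).re) (hUinner p p)
  obtain ⟨V, hV, hVn⟩ := exists_extension U' hmod hin AP AQ tdP tdQ d
  let V' : RP →ₗ[ℂ] RQ := V.toLinearEquiv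
  have hip := modIP_of_repSemi V' hVn
  refine ⟨V, ⟨V.bijective, map_add V, map_smul V, msmul_of_modIP V' V.surjective hip, hip,
    extension_equivariant U' hmod hAPG hRP hRQ V' hV hVn⟩, fun φ ψ x hφ hx hψ => ?_⟩
  have e : ψ = twist U' hmod AP AQ φ := by
    funext g
    obtain ⟨p, hp⟩ := fibMk_surj _ ((actEquiv AP g).symm (φ g))
    have hp' : AP.act g (fibMk Y P (Gp.s g) p) = φ g := by
      rw [hp, ← actEquiv_apply, LinearEquiv.apply_symm_apply]
    rw [twist_apply_of_act U' hmod AP AQ φ g hp']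
    refine hψ g p ?_
    obtain ⟨p', h'⟩ := fibMk_surj _ (φ g)
    rw [← h', fcast_mk, act_inv_mk AP (hp'.trans h'.symm), fcast_mk]
  rw [e]
  exact ((rep_iff_representsHat tdQ d).1
    (hV φ x ((rep_iff_representsHat tdP d).2 ⟨hφ, hx⟩))).2

end Stabilization
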